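/- Let f be a rational map of degree at least 2 with Julia set J. If Λ ⊂ J is an f-invariant compact uniformly expanding set that is a Cantor set, then Λ is contained in the limit set of a graph directed system satisfying the strong separation condition with respect to f, and this limit set can be chosen to lie in an arbitrarily small neighborhood of Λ. In particular, Λ is contained in an f-expanding Cantor repeller. -/

import Mathlib

open Filter Set Metric MeasureTheory Topology
open scoped ENNReal NNReal

noncomputable section

/-! ### The Riemann sphere with the chordal (spherical) metric -/

/-- The Riemann sphere `ℂ ∪ {∞}`. -/
structure RSphere : Type where
  val : Option ℂ

namespace RSphere

/-- The inclusion of `ℂ` into the Riemann sphere. -/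
def ofC (z : ℂ) : RSphere := ⟨some z⟩

/-- The point at infinity. -/
def infty : RSphere := ⟨none⟩

/-- Case elimination on a point of the Riemann sphere. -/
def elim {α : Sort*} (x : RSphere) (i : α) (h : ℂ → α) : α := Option.elim x.val i h

/-- Stereographic embedding of the Riemann sphere onto the round unit sphere in
`ℝ³ = ℂ ×₂ ℝ`.  It induces the chordal (spherical) metric on `RSphere`. -/
def embed (x : RSphere) : WithLp 2 (ℂ × ℝ) :=
  elim x ((WithLp.equiv 2 (ℂ × ℝ)).symm (0, 1))
    fun z => (WithLp.equiv 2 (ℂ × ℝ)).symm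
      (((2 / (‖z‖ ^ 2 + 1)) : ℝ) • z, (‖z‖ ^ 2 - 1) / (‖z‖ ^ 2 + 1))

/-- Inverse of the stereographic embedding. -/
def unembed (v : WithLp 2 (ℂ × ℝ)) : RSphere :=
  if (WithLp.equiv 2 (ℂ × ℝ) v).2 = 1 then infty
  else ofC ((1 - (WithLp.equiv 2 (ℂ × ℝ) v).2)⁻¹ • (WithLp.equiv 2 (ℂ × ℝ) v).1)

lemma leftInverse_unembed : Function.LeftInverse unembed embed := by
  rintro ⟨x⟩
  cases x with
  | none =>
      simp [embed, unembed, elim, infty]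
  | some z =>
      have h1 : (0 : ℝ) < ‖z‖ ^ 2 + 1 := by positivity
      have ht : (‖z‖ ^ 2 - 1) / (‖z‖ ^ 2 + 1) ≠ 1 := by
        intro h
        rw [div_eq_one_iff_eq h1.ne'] at h
        linarith
      simp only [embed, unembed, elim, Option.elim, Equiv.apply_symm_apply, ht, if_false, ofC]
      congr 2
      rw [smul_smul]
      have h2 : 1 - (‖z‖ ^ 2 - 1) / (‖z‖ ^ 2 + 1) = 2 / (‖z‖ ^ 2 + 1) := by
        field_simp
        ring
      rw [h2]
      rw [inv_mul_cancel₀ (by positivity), one_smul]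

lemma embed_injective : Function.Injective embed := leftInverse_unembed.injective

/-- The chordal metric on the Riemann sphere, induced by the stereographic embedding
onto the round unit sphere in Euclidean 3-space. -/
instance : MetricSpace RSphere := MetricSpace.induced embed embed_injective inferInstance

instance : MeasurableSpace RSphere := borel RSphere

instance : BorelSpace RSphere := ⟨rfl⟩

/-- Reading off a finite point (junk value `0` at `∞`). -/
def toC (x : RSphere) : ℂ := elim x 0 id

/-- The involution `z ↦ 1/z` of the Riemann sphere. -/
def inv (x : RSphere) : RSphere :=
  elim x (ofC 0) fun z => if z = 0 then infty else ofC z⁻¹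

end RSphere

/-! ### Basic dynamical notions -/

/-- The norm of the derivative of `g` at `x`, measured in the spherical metric
(for a rational map this is the usual norm of the spherical derivative). -/
def sphDeriv (g : RSphere → RSphere) (x : RSphere) : ℝ :=
  limsup (fun y => dist (g y) (g x) / dist y x) (𝓝[≠] x)

/-- The set of critical points. -/
def critSet (g : RSphere → RSphere) : Set RSphere := {x | sphDeriv g x = 0}

/-- The Fatou set: points having a neighbourhood on which the family of iterates is
equicontinuous (i.e. normal). -/
def fatouSet (f : RSphere → RSphere) : Set RSphere :=
  {x | ∃ U : Set RSphere, IsOpen U ∧ x ∈ U ∧ EquicontinuousOn (fun n : ℕ => f^[n]) U}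

/-- The Julia set. -/
def juliaSet (f : RSphere → RSphere) : Set RSphere := (fatouSet f)ᶜ

/-- `f` is the rational map on the Riemann sphere given by the coprime pair of
polynomials `p`, `q`. -/
structure IsRationalMap (f : RSphere → RSphere) (p q : Polynomial ℂ) : Prop where
  coprime : IsCoprime p q
  continuous : Continuous f
  eval : ∀ z : ℂ, q.eval z ≠ 0 → f (RSphere.ofC z) = RSphere.ofC (p.eval z / q.eval z)

/-- The degree of the rational map `p/q`. -/
def ratDeg (p q : Polynomial ℂ) : ℕ := max p.natDegree q.natDegree

/-- The lower Lyapunov exponent `χ̲(x) = liminf (1/n) log |(fⁿ)'(x)|`, as an extended real. -/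
def lyapLower (f : RSphere → RSphere) (x : RSphere) : EReal :=
  liminf (fun n : ℕ => ((Real.log (sphDeriv (f^[n]) x) / n : ℝ) : EReal)) atTop

/-- The upper Lyapunov exponent `χ̄(x) = limsup (1/n) log |(fⁿ)'(x)|`, as an extended real. -/
def lyapUpper (f : RSphere → RSphere) (x : RSphere) : EReal :=
  limsup (fun n : ℕ => ((Real.log (sphDeriv (f^[n]) x) / n : ℝ) : EReal)) atTop

/-- The level set `𝓛(a,b)` of points of the Julia set with lower exponent `a` and
upper exponent `b`. -/
def levelSet (f : RSphere → RSphere) (a b : EReal) : Set RSphere :=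
  {x | x ∈ juliaSet f ∧ lyapLower f x = a ∧ lyapUpper f x = b}

/-- The set `𝓛̂(α,β)` of points of the Julia set with `χ̲ ≤ β`, `χ̄ ≥ α` and `χ̄ > 0`. -/
def levelHat (f : RSphere → RSphere) (α β : ℝ) : Set RSphere :=
  {x | x ∈ juliaSet f ∧ lyapLower f x ≤ (β : EReal) ∧ (α : EReal) ≤ lyapUpper f x ∧
    0 < lyapUpper f x}

/-- Birkhoff sum `S_m φ = φ + φ∘g + ⋯ + φ∘g^{m-1}`. -/
def birkhoff (g : RSphere → RSphere) (φ : RSphere → ℝ) (m : ℕ) (x : RSphere) : ℝ :=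
  ∑ k ∈ Finset.range m, φ (g^[k] x)

/-- An `(m,ε)`-separated finite subset of `Λ` for the map `g`. -/
def IsSepSet (g : RSphere → RSphere) (Λ : Set RSphere) (m : ℕ) (ε : ℝ)
    (E : Finset RSphere) : Prop :=
  ↑E ⊆ Λ ∧ ∀ x ∈ E, ∀ y ∈ E, x ≠ y → ∃ k < m, ε ≤ dist (g^[k] x) (g^[k] y)

/-- Topological pressure of the potential `φ` for `g` restricted to `Λ`,
defined à la Bowen via `(m,ε)`-separated sets. -/
def pressureOn (g : RSphere → RSphere) (Λ : Set RSphere) (φ : RSphere → ℝ) : ℝ :=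
  ⨆ ε : {ε : ℝ // 0 < ε}, limsup (fun m : ℕ =>
    Real.log (⨆ E : {E : Finset RSphere // IsSepSet g Λ m ε.1 E},
      ∑ x ∈ E.1, Real.exp (birkhoff g φ m x)) / m) atTop

/-- `g` is uniformly expanding on `Λ`: `|(gᵐ)'(x)| ≥ c λᵐ` for some `c > 0`, `λ > 1`. -/
def ExpandingOn (g : RSphere → RSphere) (Λ : Set RSphere) : Prop :=
  ∃ c > (0 : ℝ), ∃ l : ℝ, 1 < l ∧ ∀ x ∈ Λ, ∀ m : ℕ, 1 ≤ m → c * l ^ m ≤ sphDeriv (g^[m]) x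

/-- `Λ` is a repeller for `g`: a compact invariant isolated set. -/
def IsRepeller (g : RSphere → RSphere) (Λ : Set RSphere) : Prop :=
  IsCompact Λ ∧ g '' Λ = Λ ∧
    ∃ U : Set RSphere, IsOpen U ∧ Λ ⊆ U ∧ ∀ x, (∀ m : ℕ, g^[m] x ∈ U) → x ∈ Λ

/-- Topological transitivity of `g` on `Λ`. -/
def TopTransOn (g : RSphere → RSphere) (Λ : Set RSphere) : Prop :=
  ∀ U V : Set RSphere, IsOpen U → IsOpen V → (U ∩ Λ).Nonempty → (V ∩ Λ).Nonempty →
    ∃ m : ℕ, (g^[m] '' (U ∩ Λ) ∩ V).Nonempty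

/-- The topological pressure of `φ` with respect to `f` on its Julia set, given by
the supremum of the pressures on compact invariant uniformly expanding subsets of `J`. -/
def pressureTop (f : RSphere → RSphere) (φ : RSphere → ℝ) : ℝ :=
  ⨆ L : {L : Set RSphere //
      L.Nonempty ∧ L ⊆ juliaSet f ∧ IsCompact L ∧ f '' L = L ∧ ExpandingOn f L},
    pressureOn f L.1 φ

/-- The pressure function `d ↦ P(φ_d)` where `φ_d = -d log|f'|`. -/
def pressFamily (f : RSphere → RSphere) (d : ℝ) : ℝ :=
  pressureTop f fun x => -d * Real.log (sphDeriv f x)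

/-- `F(α) = α⁻¹ inf_d (Q(d) + dα)` associated with a pressure function `Q` (for `α ≠ 0`). -/
def specF (Q : ℝ → ℝ) (α : ℝ) : EReal :=
  ((α⁻¹ : ℝ) : EReal) * ⨅ d : ℝ, ((Q d + d * α : ℝ) : EReal)

/-- `F(0) = lim_{α → 0⁺} F(α)`. -/
def specF0 (Q : ℝ → ℝ) : EReal := limsup (fun α : ℝ => specF Q α) (𝓝[>] (0 : ℝ))

/-- The full spectrum function `F` associated with a pressure function `Q`. -/
def specFext (Q : ℝ → ℝ) (α : ℝ) : EReal := if α = 0 then specF0 Q else specF Q α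

/-- The Lyapunov spectrum function `F` of `f`. -/
def Ffun (f : RSphere → RSphere) (α : ℝ) : EReal := specFext (pressFamily f) α

/-- `α⁻ = lim_{d → +∞} -Q(d)/d` for a pressure function `Q`. -/
def alphaMinusOf (Q : ℝ → ℝ) : ℝ := limsup (fun d : ℝ => -Q d / d) atTop

/-- `α⁺ = lim_{d → -∞} -Q(d)/d` for a pressure function `Q`. -/
def alphaPlusOf (Q : ℝ → ℝ) : ℝ := limsup (fun d : ℝ => -Q d / d) atBot

/-- `α⁻` for the map `f`. -/
def alphaMinus (f : RSphere → RSphere) : ℝ := alphaMinusOf (pressFamily f)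

/-- `α⁺` for the map `f`. -/
def alphaPlus (f : RSphere → RSphere) : ℝ := alphaPlusOf (pressFamily f)

/-- The Lyapunov exponent `χ(μ) = ∫ log|g'| dμ` of a measure. -/
def lyapMeas (g : RSphere → RSphere) (μ : Measure RSphere) : ℝ :=
  ∫ x, Real.log (sphDeriv g x) ∂μ

/-- `α⁻` as the infimum of Lyapunov exponents of invariant probability measures on `J`. -/
def alphaMinusMeas (f : RSphere → RSphere) : ℝ :=
  sInf {r : ℝ | ∃ μ : Measure RSphere, IsProbabilityMeasure μ ∧ MeasurePreserving f μ μ ∧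
    μ (juliaSet f)ᶜ = 0 ∧ r = lyapMeas f μ}

/-- `α⁺` as the supremum of Lyapunov exponents of invariant probability measures on `J`. -/
def alphaPlusMeas (f : RSphere → RSphere) : ℝ :=
  sSup {r : ℝ | ∃ μ : Measure RSphere, IsProbabilityMeasure μ ∧ MeasurePreserving f μ μ ∧
    μ (juliaSet f)ᶜ = 0 ∧ r = lyapMeas f μ}

/-- The maximal distortion `sup_{x,y ∈ Z} |g'(x)|/|g'(y)|` of `g` on `Z`. -/
def distortionOn (g : RSphere → RSphere) (Z : Set RSphere) : ℝ :=
  sSup {r : ℝ | ∃ x ∈ Z, ∃ y ∈ Z, r = sphDeriv g x / sphDeriv g y}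

/-- Conical points. -/
def IsConical (f : RSphere → RSphere) (x : RSphere) : Prop :=
  ∃ r : ℝ, 0 < r ∧ ∃ K : ℝ, ∃ n : ℕ → ℕ, StrictMono n ∧ ∃ U : ℕ → Set RSphere,
    ∀ i, U i ∈ 𝓝 x ∧ ball (f^[n i] x) r ⊆ f^[n i] '' U i ∧ distortionOn (f^[n i]) (U i) ≤ K

/-- A non-immediately postcritical point: there is a backward orbit through it that is
dense in the Julia set and avoids the critical points. -/
def NonImmPostCrit (f : RSphere → RSphere) (x : RSphere) : Prop :=
  ∃ b : ℕ → RSphere, b 0 = x ∧ (∀ n, f (b (n + 1)) = b n) ∧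
    juliaSet f ⊆ closure (Set.range b) ∧ ∀ n, b n ∉ critSet f

/-- `f` is exceptional: there is a finite nonempty set `Σ_f` with `f⁻¹(Σ_f) \ Crit = Σ_f`. -/
def IsExceptional (f : RSphere → RSphere) : Prop :=
  ∃ S : Set RSphere, S.Finite ∧ S.Nonempty ∧ f ⁻¹' S \ critSet f = S

/-- The largest exceptional set `Σ` of `f`. -/
def maxExceptional (f : RSphere → RSphere) : Set RSphere :=
  ⋃₀ {S : Set RSphere | S.Finite ∧ S.Nonempty ∧ f ⁻¹' S \ critSet f = S}

/-- `0` not being exceptional, or having exceptional set away from the Julia set. -/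
def GoodExc (f : RSphere → RSphere) : Prop :=
  ¬ IsExceptional f ∨ maxExceptional f ∩ juliaSet f = ∅

/-- A parabolic periodic point at a finite point `z`: a periodic point whose multiplier
is a root of unity. -/
def IsParabolicFix (g : RSphere → RSphere) (z : ℂ) : Prop :=
  ∃ m : ℕ, 0 < m ∧ g^[m] (RSphere.ofC z) = RSphere.ofC z ∧
    ∃ lam : ℂ, (∃ k : ℕ, 0 < k ∧ lam ^ k = 1) ∧
      HasDerivAt (fun w => RSphere.toC (g^[m] (RSphere.ofC w))) lam z

/-- A parabolic periodic point of `f` (at a finite point, or at `∞` read in the chart `1/z`). -/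
def IsParabolic (f : RSphere → RSphere) (x : RSphere) : Prop :=
  (∃ z : ℂ, x = RSphere.ofC z ∧ IsParabolicFix f z) ∨
  (x = RSphere.infty ∧ IsParabolicFix (fun y => RSphere.inv (f (RSphere.inv y))) 0)

/-- A recurrent point. -/
def IsRecurrentPt (f : RSphere → RSphere) (x : RSphere) : Prop :=
  ∃ n : ℕ → ℕ, StrictMono n ∧ Tendsto (fun i => f^[n i] x) atTop (𝓝 x)

/-! ### Graph directed systems and expanding Cantor repellers -/

/-- A graph directed system (GDS) satisfying the strong separation condition with
respect to the map `g`. -/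
structure GDS (g : RSphere → RSphere) where
  /-- number of vertices -/
  n : ℕ
  npos : 0 < n
  /-- the open domains -/
  U : Fin n → Set RSphere
  /-- the admissible edges -/
  edge : Fin n → Fin n → Prop
  /-- the inverse branches -/
  br : Fin n → Fin n → RSphere → RSphere
  isOpen : ∀ k, IsOpen (U k)
  isConnected : ∀ k, IsConnected (U k)
  disjClosure : ∀ k l, k ≠ l → closure (U k) ∩ closure (U l) = ∅
  mapsTo : ∀ k l, edge k l → Set.MapsTo (br k l) (closure (U l)) (U k)
  isBranch : ∀ k l, edge k l → ∀ x ∈ closure (U l), g (br k l x) = x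
  bddDistortion : ∃ C : ℝ, ∀ k l, edge k l → distortionOn (br k l) (closure (U l)) ≤ C

/-- The cylinder sets of depth `m` of a GDS. -/
def gdsCyl {g : RSphere → RSphere} (G : GDS g) : ℕ → Set RSphere
  | 0 => ⋃ k, G.U k
  | m + 1 => ⋃ (k : Fin G.n) (l : Fin G.n) (_ : G.edge k l),
      G.br k l '' (gdsCyl G m ∩ G.U l)

/-- The limit set of a GDS. -/
def gdsLimit {g : RSphere → RSphere} (G : GDS g) : Set RSphere := ⋂ m, gdsCyl G m

/-- An expanding Cantor repeller (ECR) for `g`: a uniformly expanding repeller which is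
the limit set of a GDS satisfying the strong separation condition, with `g(Λ) = Λ`. -/
def IsECR (g : RSphere → RSphere) (Λ : Set RSphere) : Prop :=
  ExpandingOn g Λ ∧ IsRepeller g Λ ∧ ∃ G : GDS g, gdsLimit G = Λ

/-- A Cantor set: compact, perfect and totally disconnected. -/
def IsCantorSet (s : Set RSphere) : Prop :=
  IsCompact s ∧ Perfect s ∧ IsTotallyDisconnected s

/-! ### Entropy, equilibrium states and dimensions -/

/-- The entropy of a countable partition (given by the fibers of `p`). -/
def partEntropy {ι : Type} [Countable ι] (μ : Measure RSphere) (p : RSphere → ι) : ℝ :=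
  ∑' i : ι, Real.negMulLog (μ (p ⁻¹' {i})).toReal

/-- Measure-theoretic (Kolmogorov–Sinai) entropy of `T` with respect to `μ`:
supremum over finite measurable partitions of the exponential growth rate of the
entropies of the dynamical refinements. -/
def entropyOf (T : RSphere → RSphere) (μ : Measure RSphere) : ℝ :=
  ⨆ p : {p : RSphere → ℕ // Measurable p ∧ (Set.range p).Finite},
    ⨅ n : {n : ℕ // 0 < n},
      partEntropy μ (fun x => fun k : Fin n.1 => p.1 (T^[(k : ℕ)] x)) / (n.1 : ℝ)

/-- An equilibrium state for the potential `φ` with respect to `g` restricted to `Λ`. -/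
def IsEquilibrium (g : RSphere → RSphere) (Λ : Set RSphere) (φ : RSphere → ℝ)
    (μ : Measure RSphere) : Prop :=
  IsProbabilityMeasure μ ∧ μ Λᶜ = 0 ∧ MeasurePreserving g μ μ ∧
    entropyOf g μ + ∫ x, φ x ∂μ = pressureOn g Λ φ

/-- The Hausdorff dimension of a measure: the infimum of the Hausdorff dimensions of
sets of full measure. -/
def dimHMeasure (μ : Measure RSphere) : ℝ≥0∞ :=
  ⨅ (s : Set RSphere) (_ : μ sᶜ = 0), dimH s

/-- The minimal number of `ε`-balls needed to cover `s`. -/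
def coverNum (s : Set RSphere) (ε : ℝ) : ℕ :=
  sInf {n : ℕ | ∃ t : Finset RSphere, t.card = n ∧ s ⊆ ⋃ x ∈ t, ball x ε}

/-- The upper box-counting dimension. -/
def upperBoxDim (s : Set RSphere) : ℝ :=
  limsup (fun n : ℕ => Real.log (coverNum s (1 / n)) / Real.log n) atTop

/-- The packing dimension, via countable covers and upper box dimensions. -/
def dimP (s : Set RSphere) : ℝ≥0∞ :=
  ⨅ c : {c : ℕ → Set RSphere // s ⊆ ⋃ n, c n},
    ⨆ n : ℕ, ENNReal.ofReal (upperBoxDim (c.1 n))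

/-- The connected component of `y` in `g⁻¹(B)`: the pull-back of `B` along the inverse
branch of `g` sending (the image of) `y` to `y`. -/
def invBranchSet (g : RSphere → RSphere) (B : Set RSphere) (y : RSphere) : Set RSphere :=
  connectedComponentIn (g ⁻¹' B) y

end

/-! ### Expanding sets in metric spaces -/

section Expanding

variable {X : Type*} [MetricSpace X] {f : X → X} {Λ : Set X} {a r : ℝ}

/-- A compact totally disconnected set splits into uniformly separated pieces of small diameter,
the fibres of `π`. -/
theorem exists_separated_partition (hc : IsCompact Λ) (ht : IsTotallyDisconnected Λ)
    {η : ℝ} (hη : 0 < η) :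
    ∃ π : X → Set Λ, ∃ δ > 0, (∀ x ∈ Λ, ∀ y ∈ Λ, dist x y < δ → π x = π y) ∧
      ∀ x ∈ Λ, ∀ y ∈ Λ, π x = π y → dist x y < η := by
  have : CompactSpace Λ := isCompact_iff_compactSpace.1 hc
  have : TotallyDisconnectedSpace Λ := totallyDisconnectedSpace_subtype_iff.2 ht
  have hV : ∀ x : Λ, ∃ V : Set Λ, IsClopen V ∧ x ∈ V ∧ V ⊆ ball x (η / 2) := fun x =>
    compact_exists_isClopen_in_isOpen isOpen_ball (mem_ball_self (by positivity))
  choose V hVc hxV hVb using hV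
  obtain ⟨t, ht⟩ := isCompact_univ.elim_finite_subcover V (fun x => (hVc x).isOpen)
    (fun x _ => mem_iUnion.2 ⟨x, hxV x⟩)
  let ϖ : Λ → Set Λ := fun y => {v | v ∈ t ∧ y ∈ V v}
  have hloc : ∀ y₀ : Λ, ∀ᶠ y in 𝓝 y₀, ϖ y = ϖ y₀ := by
    intro y₀
    have : ∀ᶠ y in 𝓝 y₀, ∀ v ∈ t, (y ∈ V v ↔ y₀ ∈ V v) := by
      rw [Filter.eventually_all_finset]
      intro v _
      by_cases h : y₀ ∈ V v
      · filter_upwards [(hVc v).isOpen.mem_nhds h] with y hy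
        simp [h, hy]
      · filter_upwards [(hVc v).compl.isOpen.mem_nhds h] with y hy
        simp only [h, iff_false]
        exact hy
    filter_upwards [this] with y hy
    ext v
    exact and_congr_right fun hv => hy v hv
  obtain ⟨δ, hδ, hδb⟩ := lebesgue_number_lemma_of_metric (isCompact_univ (X := Λ))
    (c := fun S : Set Λ => {y | ϖ y = S})
    (fun S => isOpen_iff_mem_nhds.2 fun y₀ hy₀ => by
      filter_upwards [hloc y₀] with y hy
      exact hy.trans hy₀)
    (fun y _ => mem_iUnion.2 ⟨ϖ y, rfl⟩)
  refine ⟨fun x => {v | ∃ h : x ∈ Λ, v ∈ ϖ ⟨x, h⟩}, δ, hδ, ?_, ?_⟩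
  · intro x hx y hy hxy
    obtain ⟨S, hS⟩ := hδb ⟨x, hx⟩ (mem_univ _)
    have h1 : ϖ ⟨x, hx⟩ = S := hS (mem_ball_self hδ)
    have h2 : ϖ ⟨y, hy⟩ = S := hS (by rw [mem_ball, dist_comm]; exact hxy)
    ext v
    simp [hx, hy, h1, h2]
  · intro x hx y hy hxy
    obtain ⟨v, hv, hxv⟩ := mem_iUnion₂.1 (ht (mem_univ (⟨x, hx⟩ : Λ)))
    have h1 : v ∈ {v | ∃ h : x ∈ Λ, v ∈ ϖ ⟨x, h⟩} := ⟨hx, hv, hxv⟩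
    have hxy' : {v | ∃ h : x ∈ Λ, v ∈ ϖ ⟨x, h⟩} = {v | ∃ h : y ∈ Λ, v ∈ ϖ ⟨y, h⟩} := hxy
    rw [hxy'] at h1
    obtain ⟨hy', -, hyv⟩ := h1
    have d1 : dist x v < η / 2 := hVb v hxv
    have d2 : dist y v < η / 2 := hVb v hyv
    linarith [dist_triangle_right x y v]

/-- A connected set close to `Λ` is close to a single piece of a separated partition of `Λ`. -/
theorem IsPreconnected.exists_near_same_piece {ι : Type*} {π : X → ι} {δ s : ℝ}
    (hπ : ∀ x ∈ Λ, ∀ y ∈ Λ, dist x y < δ → π x = π y) {C : Set X} (hC : IsPreconnected C)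
    (hs : 2 * s < δ) (hCΛ : ∀ y ∈ C, ∃ p ∈ Λ, dist y p ≤ s) :
    ∀ y ∈ C, ∀ y' ∈ C, ∃ p ∈ Λ, ∃ p' ∈ Λ, dist y p ≤ s ∧ dist y' p' ≤ s ∧ π p = π p' := by
  intro y hy y' hy'
  choose! P hPΛ hP using hCΛ
  refine ⟨P y, hPΛ y hy, P y', hPΛ y' hy', hP y hy, hP y' hy', ?_⟩
  let : TopologicalSpace ι := ⊥
  have : DiscreteTopology ι := ⟨rfl⟩
  refine hC.constant (f := fun z => π (P z)) (fun z hz => ?_) hy hy'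
  have : ∀ᶠ w in 𝓝[C] z, π (P w) = π (P z) := by
    filter_upwards [self_mem_nhdsWithin,
      mem_nhdsWithin_of_mem_nhds (ball_mem_nhds z (sub_pos.2 hs))] with w hw hwz
    refine hπ _ (hPΛ w hw) _ (hPΛ z hz) ?_
    rw [mem_ball] at hwz
    linarith [dist_triangle4 (P w) w z (P z), hP w hw, hP z hz, dist_comm (P w) w]
  exact tendsto_const_nhds.congr' (this.mono fun w hw => hw.symm)

/-- `f` expands distances by the factor `a` on each ball of radius `r` centred in `Λ`. -/
def LocallyExpanding (f : X → X) (Λ : Set X) (a r : ℝ) : Prop :=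
  ∀ x ∈ Λ, ∀ y ∈ ball x r, ∀ z ∈ ball x r, a * dist y z ≤ dist (f y) (f z)

theorem LocallyExpanding.injOn (h : LocallyExpanding f Λ a r) (ha : 1 < a) {x : X} (hx : x ∈ Λ) :
    InjOn f (ball x r) := by
  intro y hy z hz hyz
  have := h x hx y hy z hz
  rw [hyz, dist_self] at this
  have h0 : dist y z ≤ 0 := by nlinarith [dist_nonneg (x := y) (y := z)]
  exact dist_le_zero.1 h0

theorem LocallyExpanding.of_near (h : LocallyExpanding f Λ a r) {Λ' : Set X} {s t : ℝ}
    (hst : s + t ≤ r) (hΛ' : ∀ x ∈ Λ', ∃ p ∈ Λ, dist x p < s) : LocallyExpanding f Λ' a t := by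
  intro x hx y hy z hz
  obtain ⟨p, hp, hxp⟩ := hΛ' x hx
  have hsub : ball x t ⊆ ball p r := ball_subset_ball' (by linarith)
  exact h p hp y (hsub hy) z (hsub hz)

/-- Orbits of `f` that stay close to each other along `Λ` converge backwards exponentially. -/
theorem LocallyExpanding.pow_mul_dist_le (h : LocallyExpanding f Λ a r) (ha : 1 < a) {n : ℕ}
    {x y : X} (hn : ∀ j < n, ∃ p ∈ Λ, dist (f^[j] x) p < r ∧ dist (f^[j] y) p < r) :
    a ^ n * dist x y ≤ dist (f^[n] x) (f^[n] y) := by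
  induction n with
  | zero => simp
  | succ n ih =>
    obtain ⟨p, hp, h1, h2⟩ := hn n (Nat.lt_succ_self n)
    have h3 := h p hp _ h1 _ h2
    rw [Function.iterate_succ_apply', Function.iterate_succ_apply']
    have h4 := ih fun j hj => hn j (hj.trans (Nat.lt_succ_self n))
    calc a ^ (n + 1) * dist x y = a * (a ^ n * dist x y) := by ring
      _ ≤ a * dist (f^[n] x) (f^[n] y) := by gcongr
      _ ≤ _ := h3

theorem eq_of_pow_mul_dist_le (ha : 1 < a) {x y : X} {M : ℝ} (h : ∀ n : ℕ, a ^ n * dist x y ≤ M) :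
    x = y := by
  by_contra hxy
  have hd : 0 < dist x y := dist_pos.2 hxy
  obtain ⟨n, hn⟩ := pow_unbounded_of_one_lt (M / dist x y) ha
  rw [div_lt_iff₀ hd] at hn
  exact absurd (h n) (not_le.2 hn)

/-- Inverse branches along a compact set are defined on balls of uniform radius. -/
theorem exists_uniform_branch_radius (hc : IsCompact Λ) (hf : Continuous f) (hr : 0 < r)
    (hopen : ∀ x ∈ Λ, 𝓝 (f x) ≤ map f (𝓝 x)) :
    ∃ ρ > 0, ∀ x ∈ Λ, ∀ w, dist w (f x) < ρ → ∃ u ∈ ball x r, f u = w := by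
  have key : ∀ x ∈ Λ, ∃ t ∈ 𝓝[Λ] x, ∃ ρ > 0, ∀ x' ∈ t, ∀ w, dist w (f x') < ρ →
      ∃ u ∈ ball x' r, f u = w := by
    intro x hx
    have h1 : f '' ball x (r / 2) ∈ 𝓝 (f x) :=
      hopen x hx (image_mem_map (ball_mem_nhds x (by positivity)))
    obtain ⟨ρ, hρ, hρb⟩ := Metric.mem_nhds_iff.1 h1
    refine ⟨ball x (r / 2) ∩ f ⁻¹' ball (f x) (ρ / 2),
      mem_nhdsWithin_of_mem_nhds (inter_mem (ball_mem_nhds x (by positivity))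
        (hf.continuousAt (ball_mem_nhds _ (by positivity)))), ρ / 2, by positivity, ?_⟩
    rintro x' ⟨hx', hfx'⟩ w hw
    rw [mem_preimage, mem_ball] at hfx'
    obtain ⟨u, hu, rfl⟩ := hρb (show w ∈ ball (f x) ρ by
      rw [mem_ball]; linarith [dist_triangle w (f x') (f x)])
    refine ⟨u, ?_, rfl⟩
    rw [mem_ball] at hu hx' ⊢
    linarith [dist_triangle_right u x' x]
  refine hc.induction_on (p := fun s => ∃ ρ > 0, ∀ x' ∈ s, ∀ w, dist w (f x') < ρ →
      ∃ u ∈ ball x' r, f u = w) ⟨1, one_pos, by simp⟩ ?_ ?_ key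
  · rintro s t hst ⟨ρ, hρ, h⟩
    exact ⟨ρ, hρ, fun x hx => h x (hst hx)⟩
  · rintro s t ⟨ρ, hρ, h⟩ ⟨ρ', hρ', h'⟩
    refine ⟨min ρ ρ', lt_min hρ hρ', ?_⟩
    rintro x (hx | hx) w hw
    · exact h x hx w (hw.trans_le (min_le_left _ _))
    · exact h' x hx w (hw.trans_le (min_le_right _ _))

end Expanding

/-! ### Enlarging an expanding zero-dimensional set to a repeller -/

section Shadowing

variable {X ι : Type*} {f : X → X} {Λ : Set X} {π : X → ι} {n : ℕ} {s δ : ℝ}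

/-- Sequences in `Λ` along which consecutive points have compatible itineraries of length `n + 1`
with respect to the partition into fibres of `π`. -/
def IsItineraryChain (f : X → X) (Λ : Set X) (π : X → ι) (n : ℕ) (z : ℕ → X) : Prop :=
  ∀ k, z k ∈ Λ ∧ ∀ j ≤ n, π (f^[j] (f (z k))) = π (f^[j] (z (k + 1)))

theorem mapsTo_iterate_of_image_eq (hinv : f '' Λ = Λ) (k : ℕ) : MapsTo f^[k] Λ Λ :=
  MapsTo.iterate (fun _ hx => hinv ▸ mem_image_of_mem f hx) k

theorem IsItineraryChain.shift {z : ℕ → X} (hz : IsItineraryChain f Λ π n z) (m : ℕ) :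
    IsItineraryChain f Λ π n fun k => z (k + m) := by
  intro k
  refine ⟨(hz _).1, fun j hj => ?_⟩
  rw [(hz (k + m)).2 j hj, add_right_comm]

theorem IsItineraryChain.apply_iterate {z : ℕ → X} (hz : IsItineraryChain f Λ π n z) {j : ℕ}
    (hj : j ≤ n + 1) (k : ℕ) : π (f^[j] (z k)) = π (z (k + j)) := by
  induction j generalizing k with
  | zero => rfl
  | succ j ih =>
    rw [Function.iterate_succ_apply, (hz k).2 j (by omega), ih (by omega)]
    congr 2
    omega

variable [MetricSpace X]

/-- The points whose orbit is `s`-shadowed by an itinerary chain. -/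
def shadowSet (f : X → X) (Λ : Set X) (π : X → ι) (n : ℕ) (s : ℝ) : Set X :=
  {x | ∃ z, IsItineraryChain f Λ π n z ∧ ∀ k, dist (f^[k] x) (z k) ≤ s}

theorem isCompact_setOf_isItineraryChain (hc : IsCompact Λ) (hf : Continuous f)
    (hinv : f '' Λ = Λ) (hδ : 0 < δ) (hπ : ∀ x ∈ Λ, ∀ y ∈ Λ, dist x y < δ → π x = π y) :
    IsCompact {z | IsItineraryChain f Λ π n z} := by
  refine (isCompact_univ_pi fun _ : ℕ => hc).of_isClosed_subset ?_ fun z hz k _ => (hz k).1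
  refine isClosed_of_closure_subset fun z₀ hz₀ => ?_
  rw [mem_closure_iff_frequently] at hz₀
  have hzΛ : ∀ k, z₀ k ∈ Λ := by
    intro k
    refine hc.isClosed.mem_of_frequently_of_tendsto (hz₀.mono fun z hz => (hz k).1)
      ((continuous_apply k).tendsto z₀)
  have hmaps := mapsTo_iterate_of_image_eq hinv
  refine fun k => ⟨hzΛ k, fun j hj => ?_⟩
  have c1 : Continuous fun z : ℕ → X => f^[j] (f (z k)) :=
    (hf.iterate j).comp (hf.comp (continuous_apply k))
  have c2 : Continuous fun z : ℕ → X => f^[j] (z (k + 1)) :=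
    (hf.iterate j).comp (continuous_apply (k + 1))
  obtain ⟨z, hz, h1, h2⟩ := (hz₀.and_eventually (Filter.Eventually.and
    (c1.tendsto z₀ (ball_mem_nhds _ hδ)) (c2.tendsto z₀ (ball_mem_nhds _ hδ)))).exists
  exact (hπ _ (hmaps (j + 1) (hz k).1) _ (hmaps (j + 1) (hzΛ k)) h1).symm.trans
    (((hz k).2 j hj).trans (hπ _ (hmaps j (hz (k + 1)).1) _ (hmaps j (hzΛ (k + 1))) h2))

theorem isCompact_shadowSet [CompactSpace X] (hc : IsCompact Λ) (hf : Continuous f)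
    (hinv : f '' Λ = Λ) (hδ : 0 < δ) (hπ : ∀ x ∈ Λ, ∀ y ∈ Λ, dist x y < δ → π x = π y) :
    IsCompact (shadowSet f Λ π n s) := by
  have h1 : IsCompact ((univ : Set X) ×ˢ {z | IsItineraryChain f Λ π n z}) :=
    isCompact_univ.prod (isCompact_setOf_isItineraryChain hc hf hinv hδ hπ)
  have h2 : IsClosed {q : X × (ℕ → X) | ∀ k, dist (f^[k] q.1) (q.2 k) ≤ s} := by
    simp only [ofPred_forall]
    refine isClosed_iInter fun k => isClosed_le ?_ continuous_const
    exact ((hf.iterate k).comp continuous_fst).dist ((continuous_apply k).comp continuous_snd)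
  convert (h1.inter_right h2).image continuous_fst using 1
  ext x
  simp [shadowSet]

theorem subset_shadowSet (hinv : f '' Λ = Λ) (hs : 0 ≤ s) : Λ ⊆ shadowSet f Λ π n s := by
  intro x hx
  refine ⟨fun k => f^[k] x, fun k => ⟨mapsTo_iterate_of_image_eq hinv k hx, fun j _ => ?_⟩,
    fun k => by simpa using hs⟩
  exact congrArg (fun y => π (f^[j] y)) (Function.iterate_succ_apply' f k x).symm

theorem iterate_mem_shadowSet {x : X} (hx : x ∈ shadowSet f Λ π n s) (m : ℕ) :
    f^[m] x ∈ shadowSet f Λ π n s := by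
  obtain ⟨z, hz, h⟩ := hx
  refine ⟨fun k => z (k + m), hz.shift m, fun k => ?_⟩
  rw [← Function.iterate_add_apply]
  exact h (k + m)

/-- The set of shadowing points is a totally disconnected repeller, for a fine enough partition,
long enough itineraries and a small enough shadowing distance. -/
theorem exists_repeller_near [CompactSpace X] {a r : ℝ} (hf : Continuous f) (hc : IsCompact Λ)
    (ht : IsTotallyDisconnected Λ) (hinv : f '' Λ = Λ) (ha : 1 < a) (hr : 0 < r)
    (hexp : LocallyExpanding f Λ a r) (hopen : ∀ x ∈ Λ, 𝓝 (f x) ≤ map f (𝓝 x))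
    {s₀ : ℝ} (hs₀ : 0 < s₀) :
    ∃ Λ' : Set X, Λ ⊆ Λ' ∧ (∀ x ∈ Λ', ∃ p ∈ Λ, dist x p < s₀) ∧ IsCompact Λ' ∧ f '' Λ' = Λ' ∧
      IsTotallyDisconnected Λ' ∧
      ∃ U : Set X, IsOpen U ∧ Λ' ⊆ U ∧ ∀ x, (∀ m : ℕ, f^[m] x ∈ U) → x ∈ Λ' := by
  obtain ⟨ρ, hρ, hbranch⟩ := exists_uniform_branch_radius hc hf hr hopen
  obtain ⟨π, δ, hδ, hπ, hπ'⟩ := exists_separated_partition hc ht (half_pos hr)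
  obtain ⟨s, hs, hsδ, hsr, hsρ, hss⟩ : ∃ s > 0, s ≤ δ / 8 ∧ s ≤ r / 8 ∧ s < ρ ∧ s < s₀ := by
    refine ⟨min (min (δ / 8) (r / 8)) (min (ρ / 2) (s₀ / 2)), by positivity, ?_, ?_, ?_, ?_⟩
    · exact (min_le_left _ _).trans (min_le_left _ _)
    · exact (min_le_left _ _).trans (min_le_right _ _)
    · exact ((min_le_right _ _).trans (min_le_left _ _)).trans_lt (by linarith)
    · exact ((min_le_right _ _).trans (min_le_right _ _)).trans_lt (by linarith)
  have hβ : 0 < (a - 1) * s := mul_pos (by linarith) hs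
  obtain ⟨n, hn⟩ := pow_unbounded_of_one_lt (r / 2 / ((a - 1) * s)) ha
  rw [div_lt_iff₀ hβ] at hn
  have hmaps := mapsTo_iterate_of_image_eq hinv
  -- points of `Λ` with the same itinerary of length `n + 1` are close
  have hclose : ∀ x ∈ Λ, ∀ y ∈ Λ, (∀ j ≤ n, π (f^[j] x) = π (f^[j] y)) →
      dist x y ≤ (a - 1) * s := by
    intro x hx y hy hxy
    have hd : ∀ j ≤ n, dist (f^[j] x) (f^[j] y) < r / 2 := fun j hj =>
      hπ' _ (hmaps j hx) _ (hmaps j hy) (hxy j hj)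
    have h1 := hexp.pow_mul_dist_le ha (n := n) (x := x) (y := y) fun j hj =>
      ⟨_, hmaps j hx, by rwa [dist_self], by rw [dist_comm]; linarith [hd j hj.le]⟩
    have h2 : a ^ n * dist x y < a ^ n * ((a - 1) * s) := (h1.trans_lt (hd n le_rfl)).trans hn
    exact (lt_of_mul_lt_mul_left h2 (by positivity)).le
  have hnear : ∀ x ∈ shadowSet f Λ π n s, ∃ p ∈ Λ, dist x p ≤ s := by
    rintro x ⟨z, hz, h⟩
    exact ⟨z 0, (hz 0).1, h 0⟩
  refine ⟨shadowSet f Λ π n s, subset_shadowSet hinv hs.le, ?_,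
    isCompact_shadowSet hc hf hinv hδ hπ, ?_, ?_, ?_⟩
  · intro x hx
    obtain ⟨p, hp, h⟩ := hnear x hx
    exact ⟨p, hp, h.trans_lt hss⟩
  · refine Subset.antisymm ?_ ?_
    · rintro _ ⟨x, hx, rfl⟩
      exact iterate_mem_shadowSet hx 1
    · rintro y ⟨z, hz, h⟩
      obtain ⟨w, hw, hwz⟩ : z 0 ∈ f '' Λ := hinv.symm ▸ (hz 0).1
      have h0 : dist y (f w) ≤ s := by rw [hwz]; exact h 0
      obtain ⟨u, hu, rfl⟩ := hbranch w hw y (h0.trans_lt hsρ)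
      have hu' : dist u w ≤ s := by
        have := hexp w hw u hu w (mem_ball_self hr)
        nlinarith [dist_nonneg (x := u) (y := w)]
      refine ⟨u, ⟨fun k => Nat.casesOn k w z, ?_, ?_⟩, rfl⟩
      · rintro (_ | k)
        · exact ⟨hw, fun j _ => by simp [hwz]⟩
        · exact hz k
      · rintro (_ | k)
        · exact hu'
        · exact h k
  · intro T hT hTc x hx y hy
    have hd : ∀ k, dist (f^[k] x) (f^[k] y) ≤ r / 2 + 2 * s := by
      intro k
      obtain ⟨p, hp, p', hp', h1, h2, h3⟩ :=
        (hTc.image f^[k] (hf.iterate k).continuousOn).exists_near_same_piece hπ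
        (s := s) (by linarith) (by
          rintro _ ⟨u, hu, rfl⟩
          exact hnear _ (iterate_mem_shadowSet (hT hu) k)) _ (mem_image_of_mem _ hx) _
          (mem_image_of_mem _ hy)
      linarith [hπ' p hp p' hp' h3, dist_triangle4 (f^[k] x) p p' (f^[k] y),
        dist_comm p' (f^[k] y)]
    obtain ⟨z, hz, h⟩ := hT hx
    refine eq_of_pow_mul_dist_le ha (M := r / 2 + 2 * s) fun m =>
      (hexp.pow_mul_dist_le ha fun j _ => ⟨z j, (hz j).1, ?_, ?_⟩).trans (hd m)
    · linarith [h j]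
    · linarith [h j, hd j, dist_triangle_left (f^[j] y) (z j) (f^[j] x)]
  · obtain ⟨τ, hτ, hτr, hτδ⟩ : ∃ τ > 0, τ ≤ r / 4 ∧ ∀ j ≤ n + 1, ∀ x y : X, dist x y < τ →
        dist (f^[j] x) (f^[j] y) < δ / 4 := by
      have h1 : ∀ᶠ τ : ℝ in 𝓝[>] 0, ∀ j ∈ Finset.range (n + 2), ∀ x y : X, dist x y < τ →
          dist (f^[j] x) (f^[j] y) < δ / 4 := by
        rw [Filter.eventually_all_finset]
        intro j _
        obtain ⟨τ, hτ, h⟩ := Metric.uniformContinuous_iff.1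
          (CompactSpace.uniformContinuous_of_continuous (hf.iterate j)) (δ / 4) (by positivity)
        filter_upwards [Ioo_mem_nhdsGT hτ] with t ht x y hxy
        exact h (hxy.trans ht.2)
      obtain ⟨τ, h, hτ⟩ := (h1.and (Ioo_mem_nhdsGT (show 0 < r / 4 by positivity))).exists
      exact ⟨τ, hτ.1, hτ.2.le, fun j hj => h j (Finset.mem_range.2 (by omega))⟩
    refine ⟨thickening τ (shadowSet f Λ π n s), isOpen_thickening, self_subset_thickening hτ _,
      fun x hx => ?_⟩
    have h1 : ∀ k, ∃ y ∈ shadowSet f Λ π n s, dist (f^[k] x) y < τ := fun k =>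
      mem_thickening_iff.1 (hx k)
    choose y hy hxy using h1
    choose z hz hyz using hy
    have hW : ∀ k, ∀ j ≤ n, π (f^[j] (f (z k 0))) = π (f^[j] (z (k + 1) 0)) := by
      intro k j hj
      have e1 := (hz k).apply_iterate (show j + 1 ≤ n + 1 by omega) 0
      have e2 := (hz (k + 1)).apply_iterate (show j ≤ n + 1 by omega) 0
      rw [← Function.iterate_succ_apply, e1, e2]
      refine hπ _ (hz _ _).1 _ (hz _ _).1 ?_
      have d1 := hyz k (0 + (j + 1))
      have d2 := hyz (k + 1) (0 + j)
      have d3 := hτδ (j + 1) (by omega) _ _ (hxy k)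
      have d4 := hτδ j (by omega) _ _ (hxy (k + 1))
      rw [← Function.iterate_add_apply] at d3 d4
      rw [show j + 1 + k = j + (k + 1) by omega] at d3
      rw [zero_add] at d1 d2 ⊢
      rw [zero_add]
      have t1 := dist_triangle (z k (j + 1)) (f^[j + 1] (y k)) (z (k + 1) j)
      have t2 := dist_triangle4 (f^[j + 1] (y k)) (f^[j + (k + 1)] x) (f^[j] (y (k + 1)))
        (z (k + 1) j)
      rw [dist_comm] at d1 d3
      linarith
    have hchain : IsItineraryChain f Λ π n fun k => z k 0 := fun k => ⟨(hz k 0).1, hW k⟩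
    have he : ∀ k, dist (f^[k] x) (z k 0) ≤ s + τ := fun k => by
      have := hyz k 0
      have h2 : dist (y k) (z k 0) ≤ s := this
      linarith [dist_triangle (f^[k] x) (y k) (z k 0), hxy k]
    have hstep : ∀ k, a * (dist (f^[k] x) (z k 0) - s) ≤ dist (f^[k + 1] x) (z (k + 1) 0) - s := by
      intro k
      have h2 := hexp _ (hz k 0).1 (f^[k] x) (by rw [mem_ball]; linarith [he k]) (z k 0)
        (mem_ball_self hr)
      have h3 := hclose (f (z k 0)) (hmaps 1 (hz k 0).1) (z (k + 1) 0) (hz _ 0).1 (hW k)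
      rw [← Function.iterate_succ_apply' f] at h2
      linarith [dist_triangle_right (f^[k + 1] x) (f (z k 0)) (z (k + 1) 0)]
    have hpow : ∀ m k, a ^ m * (dist (f^[k] x) (z k 0) - s) ≤ τ := by
      intro m
      induction m with
      | zero => intro k; linarith [he k]
      | succ m ih =>
        intro k
        calc a ^ (m + 1) * (dist (f^[k] x) (z k 0) - s)
            = a ^ m * (a * (dist (f^[k] x) (z k 0) - s)) := by ring
          _ ≤ a ^ m * (dist (f^[k + 1] x) (z (k + 1) 0) - s) := by
            have := hstep k
            gcongr
          _ ≤ τ := ih (k + 1)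
    refine ⟨fun k => z k 0, hchain, fun k => ?_⟩
    by_contra! hlt
    obtain ⟨m, hm⟩ := pow_unbounded_of_one_lt (τ / (dist (f^[k] x) (z k 0) - s)) ha
    rw [div_lt_iff₀ (by linarith)] at hm
    exact absurd (hpow m k) (not_le.2 hm)

end Shadowing

/-! ### Markov domains for a totally disconnected repeller -/

section MarkovDomains

variable {X : Type*} [MetricSpace X] [LocallyConnectedSpace X] {f : X → X} {Λ : Set X}

/-- Arbitrarily small thickenings of a compact set stay combinatorially unchanged under a further
slight thickening: no two of their components meeting the set get merged. -/
theorem exists_stable_thickening (hc : IsCompact Λ) {T : ℝ} (hT : 0 < T) :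
    ∃ t t' : ℝ, 0 < t ∧ t < t' ∧ t' < T ∧ ∀ x ∈ Λ, ∀ y ∈ Λ,
      y ∈ connectedComponentIn (thickening t' Λ) x →
        y ∈ connectedComponentIn (thickening t Λ) x := by
  let t : ℕ → ℝ := fun m => T * (1 - 1 / ((m : ℝ) + 2))
  have htmono : StrictMono t := by
    refine strictMono_nat_of_lt_succ fun m => ?_
    refine mul_lt_mul_of_pos_left ?_ hT
    have : 1 / (((m + 1 : ℕ) : ℝ) + 2) < 1 / ((m : ℝ) + 2) :=
      one_div_lt_one_div_of_lt (by positivity) (by push_cast; linarith)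
    linarith
  have ht0 : ∀ m, 0 < t m := fun m => by
    refine mul_pos hT ?_
    have : 1 / ((m : ℝ) + 2) < 1 := by
      rw [div_lt_one (by positivity)]
      linarith [(Nat.cast_nonneg m : (0 : ℝ) ≤ m)]
    linarith
  have htT : ∀ m, t m < T := fun m => by
    have : 0 < 1 / ((m : ℝ) + 2) := by positivity
    have := mul_pos hT this
    simp only [t]
    linarith
  let C : ℕ → X → Set X := fun m x => connectedComponentIn (thickening (t m) Λ) x
  have hCo : ∀ m x, IsOpen (C m x) := fun m x => isOpen_thickening.connectedComponentIn
  have hself : ∀ m, ∀ x ∈ Λ, x ∈ C m x := fun m x hx =>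
    mem_connectedComponentIn (self_subset_thickening (ht0 m) _ hx)
  have hCmono : ∀ {m m'}, m ≤ m' → ∀ x, C m x ⊆ C m' x := fun h x =>
    connectedComponentIn_mono x (thickening_mono (htmono.monotone h) _)
  have hCeq : ∀ {m x y}, y ∈ C m x → C m x = C m y := fun h => connectedComponentIn_eq h
  let O : ℕ → Set (X × X) := fun m => {p | p.2 ∈ C m p.1}
  have hO : ∀ m, IsOpen (O m) := by
    refine fun m => isOpen_iff_mem_nhds.2 ?_
    rintro ⟨x, y⟩ (hxy : y ∈ C m x)
    have hx : x ∈ C m x := mem_connectedComponentIn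
      (connectedComponentIn_nonempty_iff.1 ⟨y, hxy⟩)
    refine mem_of_superset (prod_mem_nhds ((hCo m x).mem_nhds hx) ((hCo m x).mem_nhds hxy)) ?_
    rintro ⟨x', y'⟩ ⟨hx', hy'⟩
    change y' ∈ C m x'
    rw [← hCeq hx']
    exact hy'
  let B : Set (X × X) := ⋃ p ∈ (Λ ×ˢ Λ) \ ⋃ m, O m, C 0 p.1 ×ˢ C 0 p.2
  have hB : IsOpen B := isOpen_biUnion fun p _ => (hCo 0 _).prod (hCo 0 _)
  have hKO : (Λ ×ˢ Λ) \ B ⊆ ⋃ m, O m := by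
    rintro p ⟨hp, hpB⟩
    by_contra hpO
    exact hpB (mem_iUnion₂.2 ⟨p, ⟨hp, hpO⟩, hself 0 _ hp.1, hself 0 _ hp.2⟩)
  obtain ⟨m, hm⟩ := ((hc.prod hc).diff hB).elim_directed_cover O hO hKO
    (Monotone.directed_le fun i j hij p hp => hCmono hij _ hp)
  refine ⟨t m, t (m + 1), ht0 m, htmono (Nat.lt_succ_self m), htT _, fun x hx y hy hxy => ?_⟩
  refine @hm (x, y) ⟨⟨hx, hy⟩, fun hxB => ?_⟩
  obtain ⟨⟨x', y'⟩, ⟨-, hO'⟩, hx', hy'⟩ := mem_iUnion₂.1 hxB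
  refine hO' (mem_iUnion.2 ⟨m + 1, ?_⟩)
  have e1 : C (m + 1) x' = C (m + 1) x := hCeq (hCmono (Nat.zero_le _) _ hx')
  have e2 : C (m + 1) y' = C (m + 1) y := hCeq (hCmono (Nat.zero_le _) _ hy')
  have e3 : C (m + 1) x = C (m + 1) y := hCeq hxy
  change y' ∈ C (m + 1) x'
  rw [e1, e3, ← e2]
  exact mem_connectedComponentIn (connectedComponentIn_nonempty_iff.1
    ⟨y, hCmono (Nat.zero_le _) _ hy'⟩)

/-- A totally disconnected expanding repeller is covered by finitely many connected open domains
with disjoint closures which satisfy the Markov property. -/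
theorem exists_markov_domains {a r : ℝ} (hf : Continuous f) (hc : IsCompact Λ)
    (ht : IsTotallyDisconnected Λ) (hinv : f '' Λ = Λ) (ha : 1 < a) (hr : 0 < r)
    (hexp : LocallyExpanding f Λ a r) (hopen : ∀ x ∈ Λ, 𝓝 (f x) ≤ map f (𝓝 x))
    {V : Set X} (hV : IsOpen V) (hΛV : Λ ⊆ V) (hiso : ∀ x, (∀ m : ℕ, f^[m] x ∈ V) → x ∈ Λ) :
    ∃ (n : ℕ) (U : Fin n → Set X), (∀ k, IsOpen (U k)) ∧ (∀ k, IsConnected (U k)) ∧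
      (∀ k l, k ≠ l → closure (U k) ∩ closure (U l) = ∅) ∧ (∀ x ∈ Λ, ∃ k, x ∈ U k) ∧
      (∀ k, InjOn f (U k)) ∧
      (∀ k l, (∃ x ∈ Λ, x ∈ U k ∧ f x ∈ U l) → closure (U l) ⊆ f '' U k) ∧
      ∀ x, (∀ m : ℕ, ∃ k, f^[m] x ∈ U k) → x ∈ Λ := by
  obtain ⟨ρ₀, hρ₀, hbranch⟩ := exists_uniform_branch_radius hc hf hr hopen
  obtain ⟨t₀, ht₀, htV⟩ := hc.exists_thickening_subset_open hV hΛV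
  obtain ⟨ρ, hρ, hρρ₀, hρr, hρt⟩ : ∃ ρ > 0, ρ ≤ ρ₀ ∧ ρ ≤ r ∧ ρ ≤ t₀ :=
    ⟨min (min ρ₀ r) t₀, by positivity, (min_le_left _ _).trans (min_le_left _ _),
      (min_le_left _ _).trans (min_le_right _ _), min_le_right _ _⟩
  obtain ⟨π, δ, hδ, hπ, hπ'⟩ := exists_separated_partition hc ht (show 0 < ρ / 4 by positivity)
  obtain ⟨T, hT, hTδ, hTρ⟩ : ∃ T > 0, T ≤ δ / 8 ∧ T ≤ ρ / 8 :=
    ⟨min (δ / 8) (ρ / 8), by positivity, min_le_left _ _, min_le_right _ _⟩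
  obtain ⟨t, t', h0t, htt', ht'T, hstab⟩ := exists_stable_thickening hc hT
  have hmaps : MapsTo f Λ Λ := fun x hx => hinv ▸ mem_image_of_mem f hx
  have hmapsit := fun k : ℕ => hmaps.iterate k
  -- inverse branches of `f` along `Λ` contract and preserve `Λ`
  have hcontr : ∀ x ∈ Λ, ∀ u ∈ ball x r, ∀ v ∈ ball x r, dist u v ≤ dist (f u) (f v) / a := by
    intro x hx u hu v hv
    rw [le_div_iff₀ (by linarith), mul_comm]
    exact hexp x hx u hu v hv
  have hback : ∀ x ∈ Λ, ∀ u ∈ ball x r, f u ∈ Λ → dist (f u) (f x) < ρ → u ∈ Λ := by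
    intro x hx u hu hfu hd
    refine hiso u fun m => ?_
    cases m with
    | zero =>
      refine htV (mem_thickening_iff.2 ⟨x, hx, ?_⟩)
      have := hexp x hx u hu x (mem_ball_self hr)
      change dist u x < t₀
      nlinarith [dist_nonneg (x := u) (y := x)]
    | succ m => exact hΛV (hmapsit m hfu)
  let C : X → Set X := fun x => connectedComponentIn (thickening t Λ) x
  have hCo : ∀ x, IsOpen (C x) := fun x => isOpen_thickening.connectedComponentIn
  have hself : ∀ x ∈ Λ, x ∈ C x := fun x hx =>
    mem_connectedComponentIn (self_subset_thickening h0t _ hx)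
  have hclt : closure (thickening t Λ) ⊆ thickening t' Λ :=
    (closure_thickening_subset_cthickening _ _).trans
      (cthickening_subset_thickening' (h0t.trans htt') htt' _)
  have hclC : ∀ x, closure (C x) ⊆ closure (thickening t Λ) := fun x =>
    closure_mono (connectedComponentIn_subset _ _)
  have hcl : ∀ x ∈ Λ, closure (C x) ⊆ connectedComponentIn (thickening t' Λ) x := fun x hx =>
    isPreconnected_connectedComponentIn.closure.subset_connectedComponentIn
      (subset_closure (hself x hx)) ((hclC x).trans hclt)
  have hdiam : ∀ x, ∀ y ∈ closure (C x), ∀ y' ∈ closure (C x), dist y y' < ρ / 4 + 2 * T := by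
    intro x y hy y' hy'
    obtain ⟨p, hp, p', hp', h1, h2, h3⟩ :=
      (isPreconnected_connectedComponentIn.closure :
        IsPreconnected (closure (C x))).exists_near_same_piece hπ (s := T) (by linarith)
        (fun z hz => by
          obtain ⟨p, hp, h⟩ := mem_thickening_iff.1 (hclt (hclC x hz))
          exact ⟨p, hp, (h.trans ht'T).le⟩) y hy y' hy'
    linarith [hπ' p hp p' hp' h3, dist_triangle4 y p p' y', dist_comm p' y']
  have hdisj : ∀ x ∈ Λ, ∀ y ∈ Λ, (closure (C x) ∩ closure (C y)).Nonempty → C x = C y := by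
    rintro x hx y hy ⟨z, hzx, hzy⟩
    refine connectedComponentIn_eq (hstab x hx y hy ?_)
    rw [connectedComponentIn_eq (hcl x hx hzx), ← connectedComponentIn_eq (hcl y hy hzy)]
    exact mem_connectedComponentIn (self_subset_thickening (h0t.trans htt') _ hy)
  have hfin : (C '' Λ).Finite := by
    obtain ⟨F, hFΛ, hF⟩ := hc.elim_nhds_subcover C fun x hx => (hCo x).mem_nhds (hself x hx)
    refine (F.finite_toSet.image C).subset ?_
    rintro _ ⟨x, hx, rfl⟩
    obtain ⟨y, hy, hxy⟩ := mem_iUnion₂.1 (hF hx)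
    exact ⟨y, hy, connectedComponentIn_eq hxy⟩
  have := hfin.to_subtype
  obtain ⟨n, ⟨e⟩⟩ := Finite.exists_equiv_fin (C '' Λ)
  let U : Fin n → Set X := fun k => (e.symm k : Set X)
  have hU : ∀ k, ∃ x ∈ Λ, C x = U k := fun k => (e.symm k).2
  have hUx : ∀ k, ∀ x ∈ Λ, x ∈ U k → U k = C x := by
    intro k x hx hxk
    obtain ⟨y, hy, hyk⟩ := hU k
    rw [← hyk] at hxk ⊢
    exact connectedComponentIn_eq hxk
  refine ⟨n, U, ?_, ?_, ?_, ?_, ?_, ?_, ?_⟩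
  · intro k
    obtain ⟨x, hx, hxk⟩ := hU k
    exact hxk ▸ hCo x
  · intro k
    obtain ⟨x, hx, hxk⟩ := hU k
    exact hxk ▸ ⟨⟨x, hself x hx⟩, isPreconnected_connectedComponentIn⟩
  · intro k l hkl
    obtain ⟨x, hx, hxk⟩ := hU k
    obtain ⟨y, hy, hyl⟩ := hU l
    by_contra hne
    refine hkl (e.symm.injective (Subtype.ext ?_))
    change U k = U l
    rw [← hxk, ← hyl]
    refine hdisj x hx y hy ?_
    rw [hxk, hyl]
    exact nonempty_iff_ne_empty.2 hne
  · intro x hx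
    exact ⟨e ⟨C x, mem_image_of_mem C hx⟩, by simpa [U] using hself x hx⟩
  · intro k
    obtain ⟨x, hx, hxk⟩ := hU k
    refine (hexp.injOn ha hx).mono fun y hy => ?_
    rw [← hxk] at hy
    have := hdiam x y (subset_closure hy) x (subset_closure (hself x hx))
    rw [mem_ball]
    linarith
  · rintro k l ⟨x, hx, hxk, hfx⟩
    have hfxΛ := hmaps hx
    rw [hUx k x hx hxk, hUx l (f x) hfxΛ hfx]
    have hclose : ∀ y ∈ closure (C (f x)), dist y (f x) < ρ / 4 + 2 * T := fun y hy =>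
      hdiam _ y hy _ (subset_closure (hself _ hfxΛ))
    have hg : ∀ y ∈ closure (C (f x)), ∃ u ∈ ball x r, f u = y := fun y hy =>
      hbranch x hx y (by linarith [hclose y hy])
    choose! g hgb hfg using hg
    have hfxcl : f x ∈ closure (C (f x)) := subset_closure (hself _ hfxΛ)
    have hgfx : g (f x) = x :=
      hexp.injOn ha hx (hgb _ hfxcl) (mem_ball_self hr) (hfg _ hfxcl)
    have hgc : ContinuousOn g (closure (C (f x))) := by
      refine LipschitzOnWith.continuousOn (K := 1) (LipschitzOnWith.of_dist_le_mul ?_)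
      intro y hy z hz
      have := hcontr x hx _ (hgb y hy) _ (hgb z hz)
      rw [hfg y hy, hfg z hz] at this
      rw [NNReal.coe_one, one_mul]
      exact this.trans (div_le_self dist_nonneg ha.le)
    have hgt : g '' closure (C (f x)) ⊆ thickening t Λ := by
      rintro _ ⟨y, hy, rfl⟩
      have h1 : y ∈ thickening (min (a * t) T) Λ := by
        have h2 : t < min (a * t) T := lt_min (by nlinarith) (htt'.trans ht'T)
        exact cthickening_subset_thickening' (h0t.trans h2) h2 _
          (closure_thickening_subset_cthickening _ _ (hclC _ hy))
      obtain ⟨p, hp, hyp⟩ := mem_thickening_iff.1 h1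
      have hpd : dist p (f x) < ρ := by
        linarith [dist_triangle_left p (f x) y, hclose y hy, hyp.trans_le (min_le_right _ _)]
      obtain ⟨u, hu, rfl⟩ := hbranch x hx p (hpd.trans_le hρρ₀)
      refine mem_thickening_iff.2 ⟨u, hback x hx u hu hp hpd, ?_⟩
      refine (hcontr x hx _ (hgb y hy) _ hu).trans_lt ?_
      rw [hfg y hy, div_lt_iff₀ (by linarith), mul_comm]
      exact hyp.trans_le (min_le_left _ _)
    have hsub : g '' closure (C (f x)) ⊆ C x :=
      (isPreconnected_connectedComponentIn.closure.image g hgc).subset_connectedComponentIn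
        ⟨f x, hfxcl, hgfx⟩ hgt
    exact fun y hy => ⟨g y, hsub (mem_image_of_mem g hy), hfg y hy⟩
  · intro x hx
    refine hiso x fun m => ?_
    obtain ⟨k, hk⟩ := hx m
    obtain ⟨y, hy, hyk⟩ := hU k
    rw [← hyk] at hk
    refine htV (thickening_mono ?_ _ (connectedComponentIn_subset _ _ hk))
    linarith

end MarkovDomains

/-! ### Markov repellers around expanding sets -/

section MarkovRepeller

/-- `Λ` is an `f`-invariant isolated compact set which is the maximal invariant set of a finite
family of connected open domains with disjoint closures satisfying the Markov property. -/
def IsMarkovRepeller {X : Type*} [TopologicalSpace X] (f : X → X) (Λ : Set X) : Prop :=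
  IsCompact Λ ∧ f '' Λ = Λ ∧
  (∃ U : Set X, IsOpen U ∧ Λ ⊆ U ∧ ∀ x, (∀ m : ℕ, f^[m] x ∈ U) → x ∈ Λ) ∧
  ∃ (n : ℕ) (U : Fin n → Set X), (∀ k, IsOpen (U k)) ∧ (∀ k, IsConnected (U k)) ∧
    (∀ k l, k ≠ l → closure (U k) ∩ closure (U l) = ∅) ∧ (∀ x ∈ Λ, ∃ k, x ∈ U k) ∧
    (∀ k, InjOn f (U k)) ∧
    (∀ k l, (∃ x ∈ Λ, x ∈ U k ∧ f x ∈ U l) → closure (U l) ⊆ f '' U k) ∧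
    ∀ x, (∀ m : ℕ, ∃ k, f^[m] x ∈ U k) → x ∈ Λ

variable {X : Type*}

theorem LocallyExpanding.exists_isMarkovRepeller [MetricSpace X] [CompactSpace X]
    [LocallyConnectedSpace X] {f : X → X} {Λ O : Set X} {a r : ℝ} (hf : Continuous f)
    (hc : IsCompact Λ) (ht : IsTotallyDisconnected Λ) (hinv : f '' Λ = Λ) (ha : 1 < a) (hr : 0 < r)
    (hexp : LocallyExpanding f Λ a r) (hO : IsOpen O) (hΛO : Λ ⊆ O)
    (hopen : ∀ x ∈ O, 𝓝 (f x) ≤ map f (𝓝 x)) :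
    ∃ Λ' : Set X, Λ ⊆ Λ' ∧ Λ' ⊆ O ∧ IsMarkovRepeller f Λ' := by
  obtain ⟨s, hs, hsO⟩ := hc.exists_thickening_subset_open hO hΛO
  obtain ⟨Λ', hΛΛ', hnear, hc', hinv', ht', V, hV, hΛV, hiso⟩ :=
    exists_repeller_near hf hc ht hinv ha hr hexp (fun x hx => hopen x (hΛO hx))
      (s₀ := min s (r / 2)) (by positivity)
  have hΛ'O : Λ' ⊆ O := fun x hx => hsO (mem_thickening_iff.2 <| by
    obtain ⟨p, hp, h⟩ := hnear x hx
    exact ⟨p, hp, h.trans_le (min_le_left _ _)⟩)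
  have hexp' : LocallyExpanding f Λ' a (r / 2) :=
    hexp.of_near (s := min s (r / 2)) (by linarith [min_le_right s (r / 2)]) hnear
  exact ⟨Λ', hΛΛ', hΛ'O, hc', hinv', ⟨V, hV, hΛV, hiso⟩,
    exists_markov_domains hf hc' ht' hinv' ha (half_pos hr) hexp'
      (fun x hx => hopen x (hΛ'O hx)) hV hΛV hiso⟩

/-- The metric in which `f` expands by the factor `a` as soon as `f^[N]` expands by the factor
`a ^ N` in the original metric. -/
noncomputable def adaptedDist [MetricSpace X] (f : X → X) (a : ℝ) (N : ℕ) (x y : X) : ℝ :=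
  ∑ j ∈ Finset.range N, (a ^ j)⁻¹ * dist (f^[j] x) (f^[j] y)

theorem dist_le_adaptedDist [MetricSpace X] (f : X → X) {a : ℝ} (ha : 0 < a) {N : ℕ} (hN : 0 < N)
    (x y : X) : dist x y ≤ adaptedDist f a N x y := by
  have := Finset.single_le_sum (f := fun j => (a ^ j)⁻¹ * dist (f^[j] x) (f^[j] y))
    (fun j _ => by positivity) (Finset.mem_range.2 hN)
  simpa [adaptedDist] using this

theorem mul_adaptedDist_le [MetricSpace X] {f : X → X} {a : ℝ} (ha : 0 < a) {N : ℕ} {x y : X}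
    (h : a ^ N * dist x y ≤ dist (f^[N] x) (f^[N] y)) :
    a * adaptedDist f a N x y ≤ adaptedDist f a N (f x) (f y) := by
  have h1 : a * adaptedDist f a N x y + (a * ((a ^ N)⁻¹ * dist (f^[N] x) (f^[N] y)) - a * dist x y)
      = adaptedDist f a N (f x) (f y) := by
    have h2 := Finset.sum_range_succ (fun j => (a ^ j)⁻¹ * dist (f^[j] x) (f^[j] y)) N
    rw [Finset.sum_range_succ'] at h2
    simp only [pow_zero, inv_one, one_mul, Function.iterate_zero, id_eq] at h2
    have h3 : adaptedDist f a N (f x) (f y) = a * ∑ j ∈ Finset.range N,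
        (a ^ (j + 1))⁻¹ * dist (f^[j + 1] x) (f^[j + 1] y) := by
      rw [adaptedDist, Finset.mul_sum]
      refine Finset.sum_congr rfl fun j _ => ?_
      rw [Function.iterate_succ_apply, Function.iterate_succ_apply, pow_succ]
      field_simp
    rw [h3, adaptedDist]
    linear_combination -a * h2
  have h4 : dist x y ≤ (a ^ N)⁻¹ * dist (f^[N] x) (f^[N] y) := by
    rw [← div_eq_inv_mul, le_div_iff₀ (by positivity), mul_comm]
    exact h
  nlinarith

/-- The metric space structure of `adaptedDist`, compatible with the given topology. -/
noncomputable abbrev adaptedMetric [MetricSpace X] {f : X → X} (hf : Continuous f) {a : ℝ} (ha : 0 < a) {N : ℕ}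
    (hN : 0 < N) : MetricSpace X :=
  MetricSpace.ofDistTopology (adaptedDist f a N)
    (fun x => by simp [adaptedDist])
    (fun x y => by simp only [adaptedDist, dist_comm])
    (fun x y z => by
      simp only [adaptedDist]
      rw [← Finset.sum_add_distrib]
      refine Finset.sum_le_sum fun j _ => ?_
      rw [← mul_add]
      exact mul_le_mul_of_nonneg_left (dist_triangle _ _ _) (by positivity))
    (fun s => by
      refine ⟨fun hs x hx => ?_, fun hs => isOpen_iff_mem_nhds.2 fun x hx => ?_⟩
      · obtain ⟨ε, hε, h⟩ := Metric.isOpen_iff.1 hs x hx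
        refine ⟨ε, hε, fun y hy => h ?_⟩
        rw [mem_ball, dist_comm]
        exact (dist_le_adaptedDist f ha hN x y).trans_lt hy
      · obtain ⟨ε, hε, h⟩ := hs x hx
        have hcont : Continuous fun y => adaptedDist f a N x y :=
          continuous_finsetSum _ fun j _ =>
            continuous_const.mul (continuous_const.dist (hf.iterate j))
        have : ∀ᶠ y in 𝓝 x, adaptedDist f a N x y < ε :=
          hcont.continuousAt.eventually_lt_const (by simpa [adaptedDist] using hε)
        filter_upwards [this] with y hy using h y hy)
    (fun x y hxy => dist_le_zero.1 ((dist_le_adaptedDist f ha hN x y).trans hxy.le))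

/-- A totally disconnected compact invariant set near which some iterate expands distances is
contained in arbitrarily close Markov repellers. -/
theorem exists_isMarkovRepeller_of_iterate [MetricSpace X] [CompactSpace X]
    [LocallyConnectedSpace X] {f : X → X} {Λ O : Set X} {r : ℝ} {N : ℕ} (hN : 0 < N)
    (hf : Continuous f) (hc : IsCompact Λ) (ht : IsTotallyDisconnected Λ) (hinv : f '' Λ = Λ)
    (hr : 0 < r) (hexp : LocallyExpanding f^[N] Λ 2 r) (hO : IsOpen O) (hΛO : Λ ⊆ O)
    (hopen : ∀ x ∈ O, 𝓝 (f x) ≤ map f (𝓝 x)) :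
    ∃ Λ' : Set X, Λ ⊆ Λ' ∧ Λ' ⊆ O ∧ IsMarkovRepeller f Λ' := by
  obtain ⟨a, ha, haN⟩ : ∃ a : ℝ, 1 < a ∧ a ^ N = 2 :=
    ⟨2 ^ (N : ℝ)⁻¹, Real.one_lt_rpow one_lt_two (by positivity),
      Real.rpow_inv_natCast_pow (by norm_num) hN.ne'⟩
  have ha0 : 0 < a := by linarith
  have hexp' : @LocallyExpanding X (adaptedMetric hf ha0 hN) f Λ a r := by
    intro x hx y hy z hz
    refine mul_adaptedDist_le ha0 ?_
    rw [haN]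
    exact hexp x hx y ((dist_le_adaptedDist f ha0 hN y x).trans_lt hy) z
      ((dist_le_adaptedDist f ha0 hN z x).trans_lt hz)
  exact @LocallyExpanding.exists_isMarkovRepeller X (adaptedMetric hf ha0 hN) _ _ f Λ O a r hf hc ht
    hinv ha hr hexp' hO hΛO hopen

end MarkovRepeller

theorem gdsCyl_iterate_mem {f : RSphere → RSphere} (G : GDS f) {m : ℕ} {x : RSphere}
    (hx : x ∈ gdsCyl G m) {j : ℕ} (hj : j ≤ m) : ∃ k, f^[j] x ∈ G.U k := by
  induction m generalizing x j with
  | zero =>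
    obtain rfl : j = 0 := by omega
    simpa [gdsCyl] using hx
  | succ m ih =>
    simp only [gdsCyl, mem_iUnion, mem_image] at hx
    obtain ⟨k, l, hkl, y, ⟨hy, hyl⟩, rfl⟩ := hx
    cases j with
    | zero => exact ⟨k, G.mapsTo k l hkl (subset_closure hyl)⟩
    | succ j =>
      rw [Function.iterate_succ_apply, G.isBranch k l hkl y (subset_closure hyl)]
      exact ih hy (by omega)

theorem gdsLimit_iterate_mem {f : RSphere → RSphere} (G : GDS f) {x : RSphere}
    (hx : x ∈ gdsLimit G) (m : ℕ) : ∃ k, f^[m] x ∈ G.U k :=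
  gdsCyl_iterate_mem G (mem_iInter.1 hx m) le_rfl

theorem subset_gdsLimit {f : RSphere → RSphere} (G : GDS f) {Λ : Set RSphere}
    (hinv : MapsTo f Λ Λ) (hcov : ∀ x ∈ Λ, ∃ k, x ∈ G.U k)
    (hbr : ∀ x ∈ Λ, ∀ k l, x ∈ G.U k → f x ∈ G.U l → G.edge k l ∧ G.br k l (f x) = x) :
    Λ ⊆ gdsLimit G := by
  intro x hx
  refine mem_iInter.2 fun m => ?_
  induction m generalizing x with
  | zero => simpa [gdsCyl] using hcov x hx
  | succ m ih =>
    obtain ⟨k, hk⟩ := hcov x hx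
    obtain ⟨l, hl⟩ := hcov _ (hinv hx)
    obtain ⟨he, hb⟩ := hbr x hx k l hk hl
    simp only [gdsCyl, mem_iUnion, mem_image]
    exact ⟨k, l, he, f x, ⟨ih (hinv hx), hl⟩, hb⟩

open Classical in
theorem IsMarkovRepeller.exists_gds {f : RSphere → RSphere} {Λ : Set RSphere}
    (h : IsMarkovRepeller f Λ) (hne : Λ.Nonempty) : ∃ G : GDS f, gdsLimit G = Λ := by
  obtain ⟨-, hinv, -, n, U, hUo, hUc, hdisj, hcov, hinj, hmarkov, hiso⟩ := h
  obtain ⟨x₀, hx₀⟩ := hne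
  let br : Fin n → Fin n → RSphere → RSphere := fun k _ y =>
    if hy : ∃ u ∈ U k, f u = y then hy.choose else y
  have hbr : ∀ k l, (∃ x ∈ Λ, x ∈ U k ∧ f x ∈ U l) → ∀ y ∈ closure (U l),
      br k l y ∈ U k ∧ f (br k l y) = y := by
    intro k l hkl y hy
    have hex : ∃ u ∈ U k, f u = y := hmarkov k l hkl hy
    simp only [br, dif_pos hex]
    exact hex.choose_spec
  let G : GDS f :=
    { n := n
      npos := (hcov x₀ hx₀).choose.pos
      U := U
      edge := fun k l => ∃ x ∈ Λ, x ∈ U k ∧ f x ∈ U l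
      br := br
      isOpen := hUo
      isConnected := hUc
      disjClosure := hdisj
      mapsTo := fun k l hkl y hy => (hbr k l hkl y hy).1
      isBranch := fun k l hkl y hy => (hbr k l hkl y hy).2
      bddDistortion := by
        obtain ⟨C, hC⟩ := (Set.finite_range
          fun kl : Fin n × Fin n => distortionOn (br kl.1 kl.2) (closure (U kl.2))).bddAbove
        exact ⟨C, fun k l _ => hC ⟨(k, l), rfl⟩⟩ }
  refine ⟨G, Subset.antisymm (fun x hx => hiso x (gdsLimit_iterate_mem G hx)) ?_⟩
  refine subset_gdsLimit G (fun x hx => hinv ▸ mem_image_of_mem f hx) hcov ?_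
  intro x hx k l hk hl
  have hkl : ∃ x ∈ Λ, x ∈ U k ∧ f x ∈ U l := ⟨x, hx, hk, hl⟩
  obtain ⟨h1, h2⟩ := hbr k l hkl (f x) (subset_closure hl)
  exact ⟨hkl, hinj k h1 hk h2⟩

theorem exists_gds_gdsLimit_eq_empty (f : RSphere → RSphere) {U : Set RSphere} (hU : IsOpen U)
    (hUc : IsConnected U) : ∃ G : GDS f, gdsLimit G = ∅ := by
  let G : GDS f :=
    { n := 1
      npos := one_pos
      U := fun _ => U
      edge := fun _ _ => False
      br := fun _ _ y => y
      isOpen := fun _ => hU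
      isConnected := fun _ => hUc
      disjClosure := fun k l h => (h (Subsingleton.elim k l)).elim
      mapsTo := fun _ _ h => h.elim
      isBranch := fun _ _ h => h.elim
      bddDistortion := ⟨0, fun _ _ h => h.elim⟩ }
  exact ⟨G, subset_empty_iff.1 fun x hx => by simpa [gdsCyl, G] using mem_iInter.1 hx 1⟩

/-! ### Metric and topology of the Riemann sphere -/

namespace RSphere

theorem isometry_embed : Isometry embed := fun _ _ => rfl

theorem exists_eq (x : RSphere) : x = infty ∨ ∃ z, x = ofC z := by
  rcases x with ⟨_ | z⟩
  · exact Or.inl rfl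
  · exact Or.inr ⟨z, rfl⟩

theorem ofC_injective : Function.Injective ofC := fun z w h => by
  simpa [ofC] using h

theorem ofC_ne_infty (z : ℂ) : ofC z ≠ infty := by simp [ofC, infty]

@[simp]
theorem toC_ofC (z : ℂ) : toC (ofC z) = z := rfl

theorem ofC_toC {x : RSphere} (hx : x ≠ infty) : ofC (toC x) = x := by
  rcases exists_eq x with rfl | ⟨z, rfl⟩
  · exact (hx rfl).elim
  · rfl

@[simp]
theorem inv_infty : inv infty = ofC 0 := rfl

@[simp]
theorem inv_ofC_zero : inv (ofC 0) = infty := by simp [inv, elim, ofC]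

theorem inv_ofC {z : ℂ} (hz : z ≠ 0) : inv (ofC z) = ofC z⁻¹ := by simp [inv, elim, ofC, hz]

theorem inv_inv (x : RSphere) : inv (inv x) = x := by
  rcases exists_eq x with rfl | ⟨z, rfl⟩
  · simp
  · by_cases hz : z = 0
    · simp [hz]
    · rw [inv_ofC hz, inv_ofC (inv_ne_zero hz), _root_.inv_inv]

theorem dist_sq (x y : RSphere) : dist x y ^ 2 =
    ‖(embed x).fst - (embed y).fst‖ ^ 2 + ((embed x).snd - (embed y).snd) ^ 2 := by
  have h : dist x y = dist (embed x) (embed y) := rfl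
  rw [h, dist_eq_norm, WithLp.prod_norm_sq_eq_of_L2]
  simp

theorem embed_ofC_fst (z : ℂ) : (embed (ofC z)).fst = (2 / (‖z‖ ^ 2 + 1) : ℝ) • z := rfl

theorem embed_ofC_snd (z : ℂ) : (embed (ofC z)).snd = (‖z‖ ^ 2 - 1) / (‖z‖ ^ 2 + 1) := rfl

theorem embed_infty_fst : (embed infty).fst = 0 := rfl

theorem embed_infty_snd : (embed infty).snd = 1 := rfl

theorem one_sub_embed_ofC_snd (z : ℂ) : 1 - (embed (ofC z)).snd = 2 / (‖z‖ ^ 2 + 1) := by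
  have h1 : ‖z‖ ^ 2 + 1 ≠ 0 := by positivity
  rw [embed_ofC_snd]
  field_simp
  ring

theorem dist_ofC_sq (z w : ℂ) :
    dist (ofC z) (ofC w) ^ 2 = 4 * ‖z - w‖ ^ 2 / ((‖z‖ ^ 2 + 1) * (‖w‖ ^ 2 + 1)) := by
  have h1 : ‖z‖ ^ 2 + 1 ≠ 0 := by positivity
  have h2 : ‖w‖ ^ 2 + 1 ≠ 0 := by positivity
  rw [dist_sq, embed_ofC_fst, embed_ofC_fst, embed_ofC_snd, embed_ofC_snd, norm_sub_sq_real, norm_sub_sq_real, norm_smul, norm_smul, inner_smul_left, inner_smul_right]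
  simp only [Real.norm_eq_abs, mul_pow, sq_abs, RCLike.conj_to_real]
  field_simp
  ring

theorem dist_ofC_infty_sq (z : ℂ) : dist (ofC z) infty ^ 2 = 4 / (‖z‖ ^ 2 + 1) := by
  have h1 : ‖z‖ ^ 2 + 1 ≠ 0 := by positivity
  rw [dist_sq, embed_ofC_fst, embed_ofC_snd, embed_infty_fst, embed_infty_snd, sub_zero, norm_smul]
  simp only [Real.norm_eq_abs, mul_pow, sq_abs]
  field_simp
  ring

theorem dist_inv_inv_infty (z : ℂ) : dist (inv (ofC z)) (inv infty) = dist (ofC z) infty := by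
  by_cases hz : z = 0
  · simp [hz, dist_comm]
  · rw [← sq_eq_sq₀ dist_nonneg dist_nonneg, inv_ofC hz, inv_infty, dist_ofC_sq, dist_ofC_infty_sq]
    have : ‖z‖ ≠ 0 := norm_ne_zero_iff.2 hz
    simp only [sub_zero, norm_inv, norm_zero]
    field_simp
    ring

theorem dist_inv_ofC_infty (z : ℂ) : dist (inv (ofC z)) infty = dist (ofC z) (ofC 0) := by
  by_cases hz : z = 0
  · simp [hz]
  · have h := dist_inv_inv_infty z⁻¹
    rwa [← inv_ofC hz, inv_inv, inv_infty, eq_comm] at h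

theorem isometry_inv : Isometry inv := by
  refine Isometry.of_dist_eq fun x y => ?_
  rcases exists_eq x with rfl | ⟨z, rfl⟩ <;> rcases exists_eq y with rfl | ⟨w, rfl⟩
  · simp
  · rw [dist_comm, dist_inv_inv_infty, dist_comm]
  · exact dist_inv_inv_infty z
  · by_cases hz : z = 0
    · rw [hz, inv_ofC_zero, dist_comm, dist_inv_ofC_infty, dist_comm]
    by_cases hw : w = 0
    · rw [hw, inv_ofC_zero, dist_inv_ofC_infty]
    rw [← sq_eq_sq₀ dist_nonneg dist_nonneg, inv_ofC hz, inv_ofC hw, dist_ofC_sq, dist_ofC_sq]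
    have h1 : ‖z‖ ≠ 0 := norm_ne_zero_iff.2 hz
    have h2 : ‖w‖ ≠ 0 := norm_ne_zero_iff.2 hw
    rw [inv_sub_inv hz hw, norm_div, norm_mul, norm_inv, norm_inv, norm_sub_rev w z]
    field_simp
    ring

theorem isHomeomorph_inv : IsHomeomorph inv :=
  isHomeomorph_iff_exists_inverse.2
    ⟨isometry_inv.continuous, inv, inv_inv, inv_inv, isometry_inv.continuous⟩

theorem continuous_ofC : Continuous ofC := by
  rw [isometry_embed.isEmbedding.continuous_iff]
  refine (WithLp.prod_continuous_toLp 2 ℂ ℝ).comp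
    (f := fun z : ℂ => (((2 / (‖z‖ ^ 2 + 1) : ℝ) • z, (‖z‖ ^ 2 - 1) / (‖z‖ ^ 2 + 1)) : ℂ × ℝ)) ?_
  have h : ∀ z : ℂ, ‖z‖ ^ 2 + 1 ≠ 0 := fun z => by positivity
  fun_prop (disch := exact h _)

theorem toC_eq (x : RSphere) : toC x = (1 - (embed x).snd)⁻¹ • (embed x).fst := by
  rcases exists_eq x with rfl | ⟨z, rfl⟩
  · rw [embed_infty_fst, smul_zero]
    rfl
  · rw [one_sub_embed_ofC_snd, embed_ofC_fst, smul_smul, inv_mul_cancel₀ (by positivity), one_smul,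
      toC_ofC]

theorem continuousAt_toC (z : ℂ) : ContinuousAt toC (ofC z) := by
  have h2 : 1 - (embed (ofC z)).snd ≠ 0 := by
    rw [one_sub_embed_ofC_snd]
    positivity
  have h3 : Continuous fun x => (embed x).fst := by
    have := isometry_embed.continuous
    fun_prop
  have h4 : Continuous fun x => (embed x).snd := by
    have := isometry_embed.continuous
    fun_prop
  rw [show toC = _ from funext toC_eq]
  exact ((continuousAt_const.sub h4.continuousAt).inv₀ h2).smul h3.continuousAt

theorem isOpenEmbedding_ofC : IsOpenEmbedding ofC := by
  refine .of_continuous_injective_isOpenMap continuous_ofC ofC_injective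
    (isOpenMap_iff_nhds_le.2 fun z s hs => ?_)
  have h1 : ∀ᶠ x in 𝓝 (ofC z), ofC (toC x) ∈ s :=
    (continuousAt_toC z).eventually (p := fun w => ofC w ∈ s) hs
  filter_upwards [h1, isOpen_ne.mem_nhds (ofC_ne_infty z)] with x hx hx'
  rwa [ofC_toC hx'] at hx

theorem exists_isOpenEmbedding (x : RSphere) :
    ∃ φ : ℂ → RSphere, IsOpenEmbedding φ ∧ x ∈ range φ := by
  rcases exists_eq x with rfl | ⟨z, rfl⟩
  · exact ⟨inv ∘ ofC, isHomeomorph_inv.isOpenEmbedding.comp isOpenEmbedding_ofC, 0, by simp⟩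
  · exact ⟨ofC, isOpenEmbedding_ofC, z, rfl⟩

instance : CompactSpace RSphere := by
  refine ⟨?_⟩
  have hB : IsCompact (ofC '' closedBall 0 1) :=
    (isCompact_closedBall (0 : ℂ) 1).image continuous_ofC
  have h : (univ : Set RSphere) = ofC '' closedBall 0 1 ∪ inv '' (ofC '' closedBall 0 1) := by
    refine (eq_univ_of_forall fun x => ?_).symm
    rcases exists_eq x with rfl | ⟨z, rfl⟩
    · exact Or.inr ⟨ofC 0, ⟨0, by simp, rfl⟩, by simp⟩
    · rcases le_total ‖z‖ 1 with hz | hz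
      · exact Or.inl ⟨z, by simpa using hz, rfl⟩
      · have hz0 : z ≠ 0 := norm_pos_iff.1 (by linarith)
        exact Or.inr ⟨ofC z⁻¹, ⟨z⁻¹, by simpa using inv_le_one_of_one_le₀ hz, rfl⟩,
          by rw [← inv_ofC hz0, inv_inv]⟩
  rw [h]
  exact hB.union (hB.image isometry_inv.continuous)

instance : LocallyConnectedSpace RSphere := by
  refine locallyConnectedSpace_iff_subsets_isOpen_isConnected.2 fun x s hs => ?_
  obtain ⟨φ, hφ, z, rfl⟩ := exists_isOpenEmbedding x
  obtain ⟨r, hr, hrs⟩ := Metric.mem_nhds_iff.1 (hφ.continuous.continuousAt.preimage_mem_nhds hs)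
  refine ⟨φ '' ball z r, image_subset_iff.2 hrs, hφ.isOpenMap _ isOpen_ball,
    mem_image_of_mem φ (mem_ball_self hr), ?_⟩
  exact ((convex_ball z r).isConnected ⟨z, mem_ball_self hr⟩).image φ hφ.continuous.continuousOn

instance (x : RSphere) : (𝓝[≠] x).NeBot := by
  obtain ⟨φ, hφ, z, rfl⟩ := exists_isOpenEmbedding x
  have h : Tendsto φ (𝓝[≠] z) (𝓝[≠] φ z) :=
    hφ.continuous.continuousWithinAt.tendsto_nhdsWithin fun w hw h => hw (hφ.injective h)
  exact h.neBot

end RSphere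

/-! ### Metric conformality of rational maps -/

section Conformal

open Asymptotics

variable {X Y Z : Type*} [PseudoMetricSpace X] [PseudoMetricSpace Y] [PseudoMetricSpace Z]

/-- `g` scales distances near `x` asymptotically by the factor `s`. -/
def StrictConformalAt (g : X → Y) (x : X) (s : ℝ) : Prop :=
  (fun p : X × X => dist (g p.1) (g p.2) - s * dist p.1 p.2) =o[𝓝 (x, x)]
    fun p => dist p.1 p.2

theorem StrictConformalAt.isBigO {g : X → Y} {x : X} {s : ℝ} (h : StrictConformalAt g x s) :
    (fun p : X × X => dist (g p.1) (g p.2)) =O[𝓝 (x, x)] fun p => dist p.1 p.2 := by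
  refine (IsLittleO.isBigO h).add
    (isBigO_const_mul_self s (fun p : X × X => dist p.1 p.2) (𝓝 (x, x))) |>.congr_left fun p => ?_
  ring

theorem StrictConformalAt.isBigO_rev {g : X → Y} {x : X} {s : ℝ} (h : StrictConformalAt g x s)
    (hs : s ≠ 0) :
    (fun p : X × X => dist p.1 p.2) =O[𝓝 (x, x)] fun p => dist (g p.1) (g p.2) := by
  have h1 := (IsLittleO.const_mul_right hs h).right_isBigO_add
  simp only [sub_add_cancel] at h1
  exact (isBigO_self_const_mul hs _ _).trans h1

theorem StrictConformalAt.congr {g g' : X → Y} {x : X} {s : ℝ} (h : StrictConformalAt g x s)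
    (hg : g =ᶠ[𝓝 x] g') : StrictConformalAt g' x s := by
  refine IsLittleO.congr' h ?_ EventuallyEq.rfl
  filter_upwards [hg.prod_inl_nhds x, hg.prod_inr_nhds x] with p hp1 hp2
  rw [hp1, hp2]

theorem StrictConformalAt.comp {h : Y → Z} {g : X → Y} {x : X} {s t : ℝ}
    (hh : StrictConformalAt h (g x) t) (hg : StrictConformalAt g x s) (hc : ContinuousAt g x) :
    StrictConformalAt (h ∘ g) x (t * s) := by
  have hT : Tendsto (fun p : X × X => (g p.1, g p.2)) (𝓝 (x, x)) (𝓝 (g x, g x)) := by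
    rw [nhds_prod_eq, nhds_prod_eq]
    exact Tendsto.prodMap hc hc
  have h1 := (hh.comp_tendsto hT).trans_isBigO hg.isBigO
  refine (h1.add (hg.const_mul_left t)).congr_left fun p => ?_
  simp only [Function.comp_apply]
  ring

theorem StrictConformalAt.of_comp {g : Y → Z} {φ : X → Y} {x : X} {s t : ℝ}
    (hg : StrictConformalAt (g ∘ φ) x t) (hφ : StrictConformalAt φ x s) (hs : s ≠ 0)
    (hmap : 𝓝 (φ x) ≤ map φ (𝓝 x)) : StrictConformalAt g (φ x) (t / s) := by
  have h1 : 𝓝 (φ x, φ x) ≤ map (Prod.map φ φ) (𝓝 (x, x)) := by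
    rw [nhds_prod_eq, nhds_prod_eq, ← prod_map_map_eq']
    exact prod_mono hmap hmap
  refine IsLittleO.mono ?_ h1
  rw [isLittleO_map]
  refine ((hg.sub (hφ.const_mul_left (t / s))).trans_isBigO (hφ.isBigO_rev hs)).congr_left
    fun p => ?_
  simp only [Function.comp_apply, Prod.map]
  field_simp
  ring

theorem HasStrictDerivAt.strictConformalAt {F : ℂ → ℂ} {d z : ℂ} (h : HasStrictDerivAt F d z) :
    StrictConformalAt F z ‖d‖ := by
  rw [StrictConformalAt]
  simp only [dist_eq_norm]
  refine IsLittleO.trans_le (IsBigO.trans_isLittleO (.of_bound' <| .of_forall fun p => ?_)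
    h.isLittleO) fun p => (norm_norm _).ge
  simpa [mul_comm] using abs_norm_sub_norm_le (F p.1 - F p.2) ((p.1 - p.2) • d)

theorem Isometry.strictConformalAt {g : X → Y} (hg : Isometry g) (x : X) :
    StrictConformalAt g x 1 := by
  have : (fun p : X × X => dist (g p.1) (g p.2) - 1 * dist p.1 p.2) = fun _ => 0 := by
    ext p
    rw [hg.dist_eq, one_mul, sub_self]
  rw [StrictConformalAt, this]
  exact isLittleO_zero _ _

theorem strictConformalAt_id (x : X) : StrictConformalAt (id : X → X) x 1 :=
  isometry_id.strictConformalAt x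

/-- Either `g` is locally open at `x`, or its asymptotic scaling factor vanishes. -/
def ConformalOrCritical (g : X → Y) (x : X) : Prop :=
  ∃ s : ℝ, 0 ≤ s ∧ StrictConformalAt g x s ∧ (s ≠ 0 → 𝓝 (g x) ≤ map g (𝓝 x))

theorem ConformalOrCritical.of_comp {g : Y → Z} {φ : X → Y} {x : X} {s : ℝ}
    (hg : ConformalOrCritical (g ∘ φ) x) (hφ : StrictConformalAt φ x s) (hs : 0 < s)
    (hmap : map φ (𝓝 x) = 𝓝 (φ x)) : ConformalOrCritical g (φ x) := by
  obtain ⟨t, ht, hconf, hopen⟩ := hg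
  refine ⟨t / s, by positivity, hconf.of_comp hφ hs.ne' hmap.ge, fun hts => ?_⟩
  rw [← hmap, map_map]
  exact hopen fun h => hts (by rw [h, zero_div])

theorem ConformalOrCritical.comp {h : Y → Z} {g : X → Y} {x : X}
    (hh : ConformalOrCritical h (g x)) (hg : ConformalOrCritical g x) (hc : ContinuousAt g x) :
    ConformalOrCritical (h ∘ g) x := by
  obtain ⟨t, ht, hconf, hopen⟩ := hh
  obtain ⟨s, hs, hconf', hopen'⟩ := hg
  refine ⟨t * s, by positivity, hconf.comp hconf' hc, fun hts => ?_⟩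
  rw [← map_map]
  exact (hopen (left_ne_zero_of_mul hts)).trans (map_mono (hopen' (right_ne_zero_of_mul hts)))

theorem ConformalOrCritical.congr {g g' : X → Y} {x : X} (h : ConformalOrCritical g x)
    (hg : g =ᶠ[𝓝 x] g') : ConformalOrCritical g' x := by
  obtain ⟨s, hs, hconf, hopen⟩ := h
  refine ⟨s, hs, hconf.congr hg, fun h => ?_⟩
  rw [← hg.eq_of_nhds, ← map_congr hg]
  exact hopen h

theorem conformalOrCritical_id (x : X) : ConformalOrCritical (id : X → X) x :=
  ⟨1, zero_le_one, strictConformalAt_id x, fun _ => by rw [map_id, id]⟩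

theorem HasStrictDerivAt.conformalOrCritical {F : ℂ → ℂ} {d z : ℂ} (h : HasStrictDerivAt F d z) :
    ConformalOrCritical F z :=
  ⟨‖d‖, norm_nonneg d, h.strictConformalAt, fun hd =>
    (h.map_nhds_eq (norm_ne_zero_iff.1 hd)).ge⟩

theorem StrictConformalAt.tendsto_div {X : Type*} [MetricSpace X] {g : X → Y} {x : X} {s : ℝ}
    (h : StrictConformalAt g x s) :
    Tendsto (fun y => dist (g y) (g x) / dist y x) (𝓝[≠] x) (𝓝 s) := by
  have hT : Tendsto (fun y => (y, x)) (𝓝[≠] x) (𝓝 (x, x)) := by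
    rw [nhds_prod_eq]
    exact (tendsto_id'.2 nhdsWithin_le_nhds).prodMk tendsto_const_nhds
  have h1 := (h.comp_tendsto hT).tendsto_div_nhds_zero
  have h2 : Tendsto (fun y => (dist (g y) (g x) - s * dist y x) / dist y x + s) (𝓝[≠] x)
      (𝓝 (0 + s)) := h1.add_const s
  rw [zero_add] at h2
  refine h2.congr' ?_
  filter_upwards [self_mem_nhdsWithin] with y hy
  have : dist y x ≠ 0 := dist_ne_zero.2 hy
  field_simp
  ring

theorem StrictConformalAt.sphDeriv_eq {g : RSphere → RSphere} {x : RSphere} {s : ℝ}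
    (h : StrictConformalAt g x s) : sphDeriv g x = s :=
  h.tendsto_div.limsup_eq

namespace RSphere

theorem strictConformalAt_ofC (z : ℂ) : StrictConformalAt ofC z (2 / (‖z‖ ^ 2 + 1)) := by
  have hdist : ∀ p : ℂ × ℂ, dist (ofC p.1) (ofC p.2) =
      2 / (√(‖p.1‖ ^ 2 + 1) * √(‖p.2‖ ^ 2 + 1)) * dist p.1 p.2 := by
    intro p
    rw [← sq_eq_sq₀ dist_nonneg (by positivity), dist_ofC_sq, mul_pow, div_pow, mul_pow,
      Real.sq_sqrt (by positivity), Real.sq_sqrt (by positivity), dist_eq_norm]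
    ring
  have hc : Tendsto (fun p : ℂ × ℂ => 2 / (√(‖p.1‖ ^ 2 + 1) * √(‖p.2‖ ^ 2 + 1)) -
      2 / (‖z‖ ^ 2 + 1)) (𝓝 (z, z)) (𝓝 0) := by
    have h : ∀ w : ℂ, √(‖w‖ ^ 2 + 1) ≠ 0 := fun w => by positivity
    have h1 : Continuous fun p : ℂ × ℂ => 2 / (√(‖p.1‖ ^ 2 + 1) * √(‖p.2‖ ^ 2 + 1)) -
      2 / (‖z‖ ^ 2 + 1) := by
      refine (continuous_const.div (by fun_prop) fun p => mul_ne_zero (h _) (h _)).sub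
        continuous_const
    convert h1.tendsto (z, z) using 2
    simp only
    rw [Real.mul_self_sqrt (by positivity), sub_self]
  have h2 := ((isLittleO_one_iff ℝ).2 hc).mul_isBigO (isBigO_refl (fun p : ℂ × ℂ => dist p.1 p.2) _)
  simp only [one_mul] at h2
  refine h2.congr_left fun p => ?_
  rw [hdist, sub_mul]

theorem conformalOrCritical_ofC (z : ℂ) : ConformalOrCritical ofC z :=
  ⟨_, by positivity, strictConformalAt_ofC z, fun _ => (isOpenEmbedding_ofC.map_nhds_eq z).ge⟩

theorem conformalOrCritical_inv (x : RSphere) : ConformalOrCritical inv x :=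
  ⟨1, zero_le_one, RSphere.isometry_inv.strictConformalAt x,
    fun _ => (isHomeomorph_inv.isOpenEmbedding.map_nhds_eq x).ge⟩

theorem conformalOrCritical_ofC_of_eval_ne_zero {g : RSphere → RSphere} (hg : Continuous g)
    {P Q : Polynomial ℂ} {z : ℂ} (hz : Q.eval z ≠ 0)
    (h : ∀ᶠ u in 𝓝[≠] z, g (ofC u) = ofC (P.eval u / Q.eval u)) :
    ConformalOrCritical g (ofC z) := by
  have hd : HasStrictDerivAt (fun u => P.eval u / Q.eval u) _ z :=
    (P.hasStrictDerivAt z).fun_div (Q.hasStrictDerivAt z) hz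
  have h1 : ConformalOrCritical (ofC ∘ fun u => P.eval u / Q.eval u) z :=
    (conformalOrCritical_ofC _).comp hd.conformalOrCritical hd.hasDerivAt.continuousAt
  have h2 : (ofC ∘ fun u => P.eval u / Q.eval u) =ᶠ[𝓝 z] g ∘ ofC := by
    have hc1 : ContinuousAt (ofC ∘ fun u => P.eval u / Q.eval u) z :=
      continuous_ofC.continuousAt.comp hd.hasDerivAt.continuousAt
    refine (hc1.eventuallyEq_nhds_iff_eventuallyEq_nhdsNE
      (hg.comp continuous_ofC).continuousAt).1 ?_
    filter_upwards [h] with u hu using hu.symm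
  exact (h1.congr h2).of_comp (strictConformalAt_ofC z) (by positivity)
    (isOpenEmbedding_ofC.map_nhds_eq z)

theorem eventually_eval_ne_zero {Q : Polynomial ℂ} (hQ : Q ≠ 0) (z : ℂ) :
    ∀ᶠ u in 𝓝[≠] z, Q.eval u ≠ 0 := by
  have hfin : {u | Q.IsRoot u}.Finite := Polynomial.finite_setOfPred_isRoot hQ
  have := (hfin.subset (sdiff_subset (t := {z}))).isClosed.isOpen_compl.mem_nhds
    (x := z) (by simp)
  filter_upwards [nhdsWithin_le_nhds this, self_mem_nhdsWithin] with u hu hu' h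
  exact hu ⟨h, hu'⟩

theorem conformalOrCritical_ofC_of_eventually {g : RSphere → RSphere} (hg : Continuous g)
    {P Q : Polynomial ℂ} (hQ : Q ≠ 0) {z : ℂ} (hz : P.eval z ≠ 0 ∨ Q.eval z ≠ 0)
    (h : ∀ᶠ u in 𝓝[≠] z, g (ofC u) = ofC (P.eval u / Q.eval u)) :
    ConformalOrCritical g (ofC z) := by
  by_cases hQz : Q.eval z = 0
  · have hPz : P.eval z ≠ 0 := hz.resolve_right fun h => h hQz
    have hP : P ≠ 0 := fun h => hPz (by simp [h])
    have h1 : ConformalOrCritical (inv ∘ g) (ofC z) := by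
      refine conformalOrCritical_ofC_of_eval_ne_zero (RSphere.isometry_inv.continuous.comp hg)
        (P := Q) (Q := P) hPz ?_
      filter_upwards [h, eventually_eval_ne_zero hP z, eventually_eval_ne_zero hQ z]
        with u hu hPu hQu
      rw [Function.comp_apply, hu, inv_ofC (div_ne_zero hPu hQu), inv_div]
    have h2 := (conformalOrCritical_inv _).comp h1
      (RSphere.isometry_inv.continuous.comp hg).continuousAt
    exact h2.congr (Eventually.of_forall fun y => inv_inv _)
  · exact conformalOrCritical_ofC_of_eval_ne_zero hg hQz h

end RSphere

open RSphere

theorem Polynomial.eval_reflect {K : Type*} [Field K] {P : Polynomial K} {d : ℕ}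
    (hP : P.natDegree ≤ d) {u : K} (hu : u ≠ 0) :
    (P.reflect d).eval u = P.eval u⁻¹ * u ^ d := by
  have := invertibleOfNonzero (inv_ne_zero hu)
  have h := Polynomial.eval₂_reflect_mul_pow (RingHom.id K) u⁻¹ d P hP
  simp only [invOf_eq_inv, _root_.inv_inv, Polynomial.eval₂_id] at h
  rw [← h, mul_assoc, ← mul_pow, inv_mul_cancel₀ hu, one_pow, mul_one]

theorem IsRationalMap.right_ne_zero {f : RSphere → RSphere} {p q : Polynomial ℂ}
    (hf : IsRationalMap f p q) (hdeg : ratDeg p q ≠ 0) : q ≠ 0 := by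
  rintro rfl
  have h := Polynomial.natDegree_eq_zero_of_isUnit (isCoprime_zero_right.1 hf.coprime)
  simp [ratDeg, h] at hdeg

theorem IsRationalMap.conformalOrCritical {f : RSphere → RSphere} {p q : Polynomial ℂ}
    (hf : IsRationalMap f p q) (hdeg : ratDeg p q ≠ 0) (x : RSphere) :
    ConformalOrCritical f x := by
  have hq := hf.right_ne_zero hdeg
  rcases exists_eq x with rfl | ⟨z, rfl⟩
  · have h0 : ConformalOrCritical (f ∘ inv) (ofC 0) := by
      have hqd : q.reflect (ratDeg p q) ≠ 0 := by simpa using hq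
      refine conformalOrCritical_ofC_of_eventually (hf.continuous.comp RSphere.isometry_inv.continuous)
        (P := p.reflect (ratDeg p q)) hqd ?_ ?_
      · have hcoeff : ∀ (r : Polynomial ℂ) (d : ℕ), (r.reflect d).eval 0 = r.coeff d := fun r d => by
          rw [← Polynomial.coeff_zero_eq_eval_zero, Polynomial.coeff_reflect]
          simp
        rw [hcoeff, hcoeff]
        rcases max_choice p.natDegree q.natDegree with h | h
        · left
          rw [ratDeg, h, Polynomial.coeff_natDegree, Polynomial.leadingCoeff_ne_zero]
          rintro rfl
          exact hdeg (by rw [ratDeg, h, Polynomial.natDegree_zero])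
        · right
          rw [ratDeg, h, Polynomial.coeff_natDegree, Polynomial.leadingCoeff_ne_zero]
          exact hq
      · filter_upwards [eventually_eval_ne_zero hqd 0, self_mem_nhdsWithin] with u hu hu0
        have hu0' : u ≠ 0 := hu0
        have hp := Polynomial.eval_reflect (P := p) (le_max_left _ q.natDegree) hu0'
        have hq := Polynomial.eval_reflect (P := q) (le_max_right p.natDegree _) hu0'
        rw [ratDeg] at hu ⊢
        rw [hq] at hu
        rw [hp, hq, Function.comp_apply, inv_ofC hu0',
          hf.eval _ (left_ne_zero_of_mul hu), mul_div_mul_right _ _ (pow_ne_zero _ hu0')]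
    have := h0.of_comp (RSphere.isometry_inv.strictConformalAt (ofC 0)) one_pos
      (isHomeomorph_inv.isOpenEmbedding.map_nhds_eq _)
    rwa [inv_ofC_zero] at this
  · refine conformalOrCritical_ofC_of_eventually hf.continuous hq ?_ ?_ (P := p)
    · by_contra! h
      obtain ⟨a, b, hab⟩ := hf.coprime
      have := congrArg (Polynomial.eval z) hab
      simp [h.1, h.2] at this
    · filter_upwards [eventually_eval_ne_zero hq z] with u hu using hf.eval u hu

end Conformal

/-! ### Spherical derivatives and expansion -/

section SphericalDerivative

variable {f g : RSphere → RSphere}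

theorem ConformalOrCritical.strictConformalAt {x : RSphere} (h : ConformalOrCritical g x) :
    StrictConformalAt g x (sphDeriv g x) := by
  obtain ⟨s, -, hconf, -⟩ := h
  rwa [hconf.sphDeriv_eq]

theorem ConformalOrCritical.sphDeriv_nonneg {x : RSphere} (h : ConformalOrCritical g x) :
    0 ≤ sphDeriv g x := by
  obtain ⟨s, hs, hconf, -⟩ := h
  rwa [hconf.sphDeriv_eq]

theorem ConformalOrCritical.nhds_le_map {x : RSphere} (h : ConformalOrCritical g x)
    (hx : sphDeriv g x ≠ 0) : 𝓝 (g x) ≤ map g (𝓝 x) := by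
  obtain ⟨s, -, hconf, hopen⟩ := h
  exact hopen (hconf.sphDeriv_eq ▸ hx)

theorem ConformalOrCritical.sphDeriv_comp {h : RSphere → RSphere} {x : RSphere}
    (hh : ConformalOrCritical h (g x)) (hg : ConformalOrCritical g x) (hc : ContinuousAt g x) :
    sphDeriv (h ∘ g) x = sphDeriv h (g x) * sphDeriv g x :=
  (hh.strictConformalAt.comp hg.strictConformalAt hc).sphDeriv_eq

theorem ConformalOrCritical.tendsto_div {x : RSphere} (h : ConformalOrCritical g x) :
    Tendsto (fun y => dist (g y) (g x) / dist y x) (𝓝[≠] x) (𝓝 (sphDeriv g x)) :=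
  h.strictConformalAt.tendsto_div

theorem ConformalOrCritical.sphDeriv_le {x : RSphere} (h : ConformalOrCritical g x) {K : ℝ}
    (hK : ∀ᶠ y in 𝓝 x, dist (g y) (g x) ≤ K * dist y x) : sphDeriv g x ≤ K := by
  refine le_of_tendsto h.tendsto_div ?_
  filter_upwards [nhdsWithin_le_nhds hK, self_mem_nhdsWithin] with y hy hyx
  exact (div_le_iff₀ (dist_pos.2 hyx)).2 hy

theorem ConformalOrCritical.le_sphDeriv {x : RSphere} (h : ConformalOrCritical g x) {K : ℝ}
    (hK : ∀ᶠ y in 𝓝 x, K * dist y x ≤ dist (g y) (g x)) : K ≤ sphDeriv g x := by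
  refine ge_of_tendsto h.tendsto_div ?_
  filter_upwards [nhdsWithin_le_nhds hK, self_mem_nhdsWithin] with y hy hyx
  exact (le_div_iff₀ (dist_pos.2 hyx)).2 hy

theorem ConformalOrCritical.eventually_le_dist {x : RSphere} (h : ConformalOrCritical g x) {a : ℝ}
    (ha : a < sphDeriv g x) :
    ∀ᶠ p : RSphere × RSphere in 𝓝 (x, x), a * dist p.1 p.2 ≤ dist (g p.1) (g p.2) := by
  filter_upwards [h.strictConformalAt.bound (sub_pos.2 ha)] with p hp
  rw [Real.norm_eq_abs, Real.norm_of_nonneg dist_nonneg] at hp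
  linarith [(abs_le.1 hp).1]

theorem ConformalOrCritical.eventually_dist_le {x : RSphere} (h : ConformalOrCritical g x) {a : ℝ}
    (ha : sphDeriv g x < a) :
    ∀ᶠ p : RSphere × RSphere in 𝓝 (x, x), dist (g p.1) (g p.2) ≤ a * dist p.1 p.2 := by
  filter_upwards [h.strictConformalAt.bound (sub_pos.2 ha)] with p hp
  rw [Real.norm_eq_abs, Real.norm_of_nonneg dist_nonneg] at hp
  linarith [(abs_le.1 hp).2]

theorem exists_sphDeriv_le (hC : ∀ x, ConformalOrCritical f x) :
    ∃ L : ℝ, 1 ≤ L ∧ ∀ x, sphDeriv f x ≤ L := by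
  have h : ∃ L : ℝ, ∀ x ∈ (univ : Set RSphere), sphDeriv f x ≤ L := by
    refine isCompact_univ.induction_on (p := fun s => ∃ L : ℝ, ∀ x ∈ s, sphDeriv f x ≤ L)
      ⟨0, by simp⟩ (fun s t hst ⟨L, hL⟩ => ⟨L, fun x hx => hL x (hst hx)⟩)
      (fun s t ⟨L, hL⟩ ⟨M, hM⟩ => ⟨max L M, fun x hx => hx.elim
        (fun h => (hL x h).trans (le_max_left _ _)) fun h => (hM x h).trans (le_max_right _ _)⟩)
      fun x _ => ?_
    obtain ⟨r, hr, h⟩ := Metric.eventually_nhds_iff_ball.1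
      ((hC x).eventually_dist_le (lt_add_one _))
    refine ⟨ball x r, mem_nhdsWithin_of_mem_nhds (ball_mem_nhds x hr), _, fun y hy =>
      (hC y).sphDeriv_le (K := sphDeriv f x + 1) ?_⟩
    filter_upwards [isOpen_ball.mem_nhds hy] with z hz
    refine h (z, y) ?_
    rw [← ball_prod_same]
    exact ⟨hz, hy⟩
  obtain ⟨L, hL⟩ := h
  exact ⟨max 1 L, le_max_left _ _, fun x => (hL x (mem_univ x)).trans (le_max_right _ _)⟩

theorem ConformalOrCritical.iterate (hf : Continuous f) (hC : ∀ x, ConformalOrCritical f x)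
    (m : ℕ) (x : RSphere) : ConformalOrCritical f^[m] x := by
  induction m generalizing x with
  | zero => exact conformalOrCritical_id x
  | succ m ih => exact (ih (f x)).comp (hC x) hf.continuousAt

theorem sphDeriv_iterate_add (hf : Continuous f) (hC : ∀ x, ConformalOrCritical f x)
    (m n : ℕ) (x : RSphere) :
    sphDeriv f^[m + n] x = sphDeriv f^[m] (f^[n] x) * sphDeriv f^[n] x := by
  rw [Function.iterate_add]
  exact (ConformalOrCritical.iterate hf hC m _).sphDeriv_comp (.iterate hf hC n x)
    (hf.iterate n).continuousAt

theorem sphDeriv_iterate_le_pow (hf : Continuous f) (hC : ∀ x, ConformalOrCritical f x)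
    {L : ℝ} (hL : ∀ x, sphDeriv f x ≤ L) (m : ℕ) (x : RSphere) : sphDeriv f^[m] x ≤ L ^ m := by
  induction m generalizing x with
  | zero => rw [pow_zero]; exact (strictConformalAt_id x).sphDeriv_eq.le
  | succ m ih =>
    rw [sphDeriv_iterate_add hf hC, pow_succ]
    have h0 := (hC x).sphDeriv_nonneg
    exact mul_le_mul (ih _) (hL x) h0 (pow_nonneg (h0.trans (hL x)) m)

theorem IsCompact.exists_locallyExpanding (hC : ∀ x, ConformalOrCritical g x)
    {Λ : Set RSphere} (hc : IsCompact Λ) {a : ℝ} (ha : ∀ x ∈ Λ, a < sphDeriv g x) :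
    ∃ r > 0, LocallyExpanding g Λ a r := by
  have h : ∀ x ∈ Λ, ∃ r > 0, ∀ y ∈ ball x r, ∀ z ∈ ball x r,
      a * dist y z ≤ dist (g y) (g z) := by
    intro x hx
    obtain ⟨r, hr, h⟩ := Metric.eventually_nhds_iff_ball.1 ((hC x).eventually_le_dist (ha x hx))
    refine ⟨r, hr, fun y hy z hz => h (y, z) ?_⟩
    rw [← ball_prod_same]
    exact ⟨hy, hz⟩
  choose! ρ hρ hexp using h
  obtain ⟨r, hr, hleb⟩ := lebesgue_number_lemma_of_metric (c := fun x : Λ => ball (x : RSphere) (ρ x))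
    hc (fun _ => isOpen_ball) fun x hx => mem_iUnion.2 ⟨⟨x, hx⟩, mem_ball_self (hρ x hx)⟩
  refine ⟨r, hr, fun x hx y hy z hz => ?_⟩
  obtain ⟨w, hw⟩ := hleb x hx
  exact hexp w w.2 y (hw hy) z (hw hz)

theorem LocallyExpanding.le_sphDeriv (hC : ∀ x, ConformalOrCritical g x) {Λ : Set RSphere}
    {a r : ℝ} (h : LocallyExpanding g Λ a r) {x : RSphere} (hx : x ∈ thickening r Λ) :
    a ≤ sphDeriv g x := by
  obtain ⟨p, hp, hxp⟩ := mem_thickening_iff.1 hx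
  refine (hC x).le_sphDeriv ?_
  filter_upwards [isOpen_ball.mem_nhds (mem_ball.2 hxp)] with y hy
  exact h p hp y hy x hxp

theorem expandingOn_of_iterate (hf : Continuous f) (hC : ∀ x, ConformalOrCritical f x)
    {Λ : Set RSphere} (hinv : MapsTo f Λ Λ) {N : ℕ} (hN : 0 < N)
    (h : ∀ x ∈ Λ, 2 ≤ sphDeriv f^[N] x) : ExpandingOn f Λ := by
  obtain ⟨L, hL1, hL⟩ := exists_sphDeriv_le hC
  have hL0 : 0 < L := one_pos.trans_le hL1
  have hl : 1 < (2 : ℝ) ^ (N : ℝ)⁻¹ := Real.one_lt_rpow one_lt_two (by positivity)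
  set l : ℝ := (2 : ℝ) ^ (N : ℝ)⁻¹ with hl_def
  have hlN : l ^ N = 2 := by
    rw [hl_def, Real.rpow_inv_natCast_pow zero_le_two hN.ne']
  suffices hmain : ∀ m : ℕ, ∀ x ∈ Λ, (L ^ N)⁻¹ * l ^ m ≤ sphDeriv f^[m] x from
    ⟨(L ^ N)⁻¹, by positivity, l, hl, fun x hx m _ => hmain m x hx⟩
  intro m
  induction m using Nat.strong_induction_on with
  | _ m ih =>
    intro x hx
    rcases lt_or_ge m N with hm | hm
    · have h1 := sphDeriv_iterate_add hf hC (N - m) m x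
      rw [Nat.sub_add_cancel hm.le] at h1
      have h2 : sphDeriv f^[N] x ≤ L ^ N * sphDeriv f^[m] x := by
        rw [h1]
        have h3 : sphDeriv f^[N - m] (f^[m] x) ≤ L ^ N :=
          (sphDeriv_iterate_le_pow hf hC hL _ _).trans (pow_le_pow_right₀ hL1 (Nat.sub_le _ _))
        exact mul_le_mul_of_nonneg_right h3 (ConformalOrCritical.iterate hf hC m x).sphDeriv_nonneg
      rw [inv_mul_le_iff₀ (by positivity)]
      calc l ^ m ≤ l ^ N := pow_le_pow_right₀ hl.le hm.le
        _ = 2 := hlN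
        _ ≤ _ := (h x hx).trans h2
    · have h1 := sphDeriv_iterate_add hf hC (m - N) N x
      rw [Nat.sub_add_cancel hm] at h1
      have h2 := ih (m - N) (by omega) _ (hinv.iterate N hx)
      calc (L ^ N)⁻¹ * l ^ m = (L ^ N)⁻¹ * l ^ (m - N) * 2 := by
            rw [mul_assoc, ← hlN, ← pow_add, Nat.sub_add_cancel hm]
        _ ≤ sphDeriv f^[m - N] (f^[N] x) * sphDeriv f^[N] x :=
            mul_le_mul h2 (h x hx) zero_le_two (le_trans (by positivity) h2)
        _ = _ := h1.symm

end SphericalDerivative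

theorem ExpandingOn.exists_isMarkovRepeller {f : RSphere → RSphere} (hf : Continuous f)
    (hC : ∀ x, ConformalOrCritical f x) {Λ : Set RSphere} (hc : IsCompact Λ)
    (ht : IsTotallyDisconnected Λ) (hinv : f '' Λ = Λ) (hexp : ExpandingOn f Λ) {U : Set RSphere}
    (hU : IsOpen U) (hΛU : Λ ⊆ U) :
    ∃ Λ', Λ ⊆ Λ' ∧ Λ' ⊆ U ∧ IsMarkovRepeller f Λ' ∧ ExpandingOn f Λ' := by
  obtain ⟨c, hc0, l, hl, hexp⟩ := hexp
  obtain ⟨N, hN0, hN⟩ : ∃ N : ℕ, 0 < N ∧ 2 < c * l ^ N := by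
    have h := ((tendsto_pow_atTop_atTop_of_one_lt hl).const_mul_atTop hc0).eventually_gt_atTop 2
    obtain ⟨N, h1, h2⟩ := (h.and (eventually_gt_atTop 0)).exists
    exact ⟨N, h2, h1⟩
  have hCN := ConformalOrCritical.iterate hf hC N
  obtain ⟨r, hr, hloc⟩ := hc.exists_locallyExpanding hCN fun x hx => hN.trans_le (hexp x hx N hN0)
  obtain ⟨Λ', hΛΛ', hΛ'O, hM⟩ := exists_isMarkovRepeller_of_iterate hN0 hf hc ht hinv hr hloc
    (hU.inter (isOpen_thickening (δ := r) (E := Λ)))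
    (subset_inter hΛU (self_subset_thickening hr Λ)) fun x hx => (hC x).nhds_le_map fun h0 => by
      have h1 := hloc.le_sphDeriv hCN hx.2
      have h2 := sphDeriv_iterate_add hf hC (N - 1) 1 x
      rw [Nat.sub_add_cancel hN0, Function.iterate_one, h0, mul_zero] at h2
      linarith
  exact ⟨Λ', hΛΛ', hΛ'O.trans inter_subset_left, hM, expandingOn_of_iterate hf hC
    (mapsTo_iff_image_subset.2 hM.2.1.subset) hN0 fun x hx => hloc.le_sphDeriv hCN (hΛ'O hx).2⟩

theorem isECR_empty (f : RSphere → RSphere) : IsECR f ∅ := by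
  refine ⟨⟨1, one_pos, 2, one_lt_two, by simp⟩,
    ⟨isCompact_empty, image_empty f, ∅, isOpen_empty, subset_rfl, fun x hx => hx 0⟩, ?_⟩
  obtain ⟨V, -, hV, -, hVc⟩ := locallyConnectedSpace_iff_subsets_isOpen_isConnected.1
    inferInstance RSphere.infty univ univ_mem
  exact exists_gds_gdsLimit_eq_empty f hV hVc

/-- **Lemma (expanding Cantor sets sit inside ECRs).**
If `Λ ⊆ J` is an `f`-invariant compact uniformly expanding Cantor set, then `Λ` is
contained in the limit set of a GDS satisfying the strong separation condition with
respect to `f`, and this limit set can be chosen inside any given neighbourhood of `Λ`.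
In particular `Λ` is contained in an `f`-expanding Cantor repeller. -/
theorem cantor_expanding_subset_ECR (f : RSphere → RSphere) (p q : Polynomial ℂ)
    (hf : IsRationalMap f p q) (hdeg : 2 ≤ ratDeg p q)
    (Λ : Set RSphere) (hΛJ : Λ ⊆ juliaSet f) (hcomp : IsCompact Λ)
    (hinv : f '' Λ = Λ) (hexp : ExpandingOn f Λ) (hcantor : IsCantorSet Λ) :
    (∀ U : Set RSphere, IsOpen U → Λ ⊆ U →
      ∃ G : GDS f, Λ ⊆ gdsLimit G ∧ gdsLimit G ⊆ U) ∧
    ∃ Λ' : Set RSphere, IsECR f Λ' ∧ Λ ⊆ Λ' := by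
  have hC := hf.conformalOrCritical (by omega)
  rcases Λ.eq_empty_or_nonempty with rfl | hne
  · have h := isECR_empty f
    obtain ⟨G, hG⟩ := h.2.2
    exact ⟨fun U _ _ => ⟨G, empty_subset _, hG ▸ empty_subset _⟩, ∅, h, subset_rfl⟩
  · refine ⟨fun U hU hΛU => ?_, ?_⟩
    · obtain ⟨Λ', hΛΛ', hΛ'U, hM, -⟩ :=
        hexp.exists_isMarkovRepeller hf.continuous hC hcomp hcantor.2.2 hinv hU hΛU
      obtain ⟨G, rfl⟩ := hM.exists_gds (hne.mono hΛΛ')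
      exact ⟨G, hΛΛ', hΛ'U⟩
    · obtain ⟨Λ', hΛΛ', -, hM, hexp'⟩ := hexp.exists_isMarkovRepeller hf.continuous hC hcomp
        hcantor.2.2 hinv isOpen_univ (subset_univ Λ)
      exact ⟨Λ', ⟨hexp', ⟨hM.1, hM.2.1, hM.2.2.1⟩, hM.exists_gds (hne.mono hΛΛ')⟩, hΛΛ'⟩
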